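/- For every η > 0 there is an integer n₀ = n₀(η) such that every d-regular (undirected) graph on n ≥ n₀ vertices with d ≥ (1/2 + η)n contains at least (d − ηn)/2 pairwise edge-disjoint Hamilton cycles. -/

import Mathlib

namespace HamiltonPacking
open Finset Filter

/-- The successor permutation of the cyclic order given by `e`. -/
def succPerm {V : Type*} {n : ℕ} [NeZero n] (e : Fin n ≃ V) : Equiv.Perm V :=
  e.symm.trans ((Equiv.addRight 1).trans e)

/-- The edges joining consecutive elements of the cyclic order given by `e`. -/
def cycEdges {V : Type*} [DecidableEq V] {n : ℕ} [NeZero n] (e : Fin n ≃ V) : Finset (Sym2 V) :=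
  univ.image fun j => s(e j, e (j + 1))

section CyclicOrder
variable {V : Type*} {n : ℕ} [NeZero n] (e : Fin n ≃ V)

@[simp] lemma succPerm_apply (j : Fin n) : succPerm e (e j) = e (j + 1) := by
  simp [succPerm]

@[simp] lemma succPerm_symm_apply (j : Fin n) : (succPerm e).symm (e j) = e (j - 1) := by
  rw [Equiv.symm_apply_eq]; simp

lemma mem_cycEdges [DecidableEq V] {z : Sym2 V} :
    z ∈ cycEdges e ↔ ∃ v, s(v, succPerm e v) = z := by
  simp only [cycEdges, mem_image, mem_univ, true_and]
  constructor
  · rintro ⟨j, rfl⟩; exact ⟨e j, by simp⟩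
  · rintro ⟨v, rfl⟩; exact ⟨e.symm v, by rw [← succPerm_apply]; simp⟩

lemma mk_succPerm_mem [DecidableEq V] (v : V) : s(v, succPerm e v) ∈ cycEdges e :=
  (mem_cycEdges e).2 ⟨v, rfl⟩

lemma succPerm_ne (hn : 2 ≤ n) (v : V) : succPerm e v ≠ v := by
  obtain ⟨j, rfl⟩ := e.surjective v
  rw [succPerm_apply, Ne, e.injective.eq_iff, add_eq_left]
  intro h
  have := congrArg Fin.val h
  obtain ⟨m, rfl⟩ : ∃ m, n = m + 2 := ⟨n - 2, by omega⟩
  simp at this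

lemma succPerm_succPerm_ne (hn : 3 ≤ n) (v : V) : succPerm e (succPerm e v) ≠ v := by
  obtain ⟨j, rfl⟩ := e.surjective v
  rw [succPerm_apply, succPerm_apply, Ne, e.injective.eq_iff, add_assoc, add_eq_left]
  intro h
  have := congrArg Fin.val h
  obtain ⟨m, rfl⟩ : ∃ m, n = m + 3 := ⟨n - 3, by omega⟩
  have h2 : 2 % (m + 3) = 2 := Nat.mod_eq_of_lt (by omega)
  simp [Fin.val_add, h2] at this

lemma mk_succPerm_injective (hn : 3 ≤ n) :
    Function.Injective fun v => s(v, succPerm e v) := by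
  intro v w h
  simp only [Sym2.eq_iff] at h
  rcases h with ⟨h, -⟩ | ⟨h, h'⟩
  · exact h
  · subst h
    exact absurd h' (succPerm_succPerm_ne e hn w)

lemma cycEdges_eq_image [DecidableEq V] [Fintype V] :
    cycEdges e = univ.image fun v => s(v, succPerm e v) := by
  ext z; simp [mem_cycEdges]

lemma card_cycEdges [DecidableEq V] (hn : 3 ≤ n) : (cycEdges e).card = n := by
  have : Fintype V := Fintype.ofEquiv _ e
  rw [cycEdges_eq_image, card_image_of_injective _ (mk_succPerm_injective e hn), card_univ,
    ← Fintype.card_congr e, Fintype.card_fin]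

lemma mem_cycEdges_iff_or [DecidableEq V] {v w : V} :
    s(v, w) ∈ cycEdges e ↔ succPerm e v = w ∨ succPerm e w = v := by
  rw [mem_cycEdges]
  constructor
  · rintro ⟨u, hu⟩
    rw [Sym2.eq_iff] at hu
    rcases hu with ⟨rfl, h⟩ | ⟨rfl, h⟩
    · exact Or.inl h
    · exact Or.inr h
  · rintro (rfl | rfl)
    · exact ⟨v, rfl⟩
    · exact ⟨w, Sym2.eq_swap⟩

end CyclicOrder

/-- A cyclic order all of whose consecutive elements are adjacent yields a Hamilton cycle. -/
lemma exists_isHamiltonianCycle {V : Type*} [Fintype V] [DecidableEq V] (G : SimpleGraph V)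
    {n : ℕ} [NeZero n] (hn : 3 ≤ n) (e : Fin n ≃ V) (he : ∀ v, G.Adj v (succPerm e v)) :
    ∃ (x : V) (c : G.Walk x x), c.IsHamiltonianCycle ∧ ∀ z ∈ c.edges, z ∈ cycEdges e := by
  obtain ⟨m, rfl⟩ : ∃ m, n = m + 3 := ⟨n - 3, by omega⟩
  have key : ∀ a b : Fin (m + 3), (SimpleGraph.cycleGraph (m + 3)).Adj a b →
      b = a + 1 ∨ a = b + 1 := by
    intro a b h
    rw [SimpleGraph.cycleGraph_adj] at h
    rcases h with h | h
    · right; rw [← h]; abel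
    · left; rw [← h]; abel
  let f : SimpleGraph.cycleGraph (m + 3) →g G :=
    { toFun := e
      map_rel' := by
        intro a b h
        rcases key a b h with rfl | rfl
        · simpa using he (e a)
        · simpa using (he (e b)).symm }
  refine ⟨_, (SimpleGraph.cycleGraph.cycle m).map f, ?_, ?_⟩
  · apply SimpleGraph.Walk.IsHamiltonianCycle.map (f := f) e.bijective
    refine ⟨SimpleGraph.cycleGraph.isCycle_cycle, ?_⟩
    rw [SimpleGraph.Walk.isHamiltonian_iff_isPath_and_length_eq]
    refine ⟨SimpleGraph.cycleGraph.isPath_tail_cycle, ?_⟩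
    have h1 := SimpleGraph.Walk.length_tail_add_one
      (SimpleGraph.cycleGraph.isCycle_cycle (n := m)).not_nil
    rw [SimpleGraph.cycleGraph.length_cycle] at h1
    simp only [Fintype.card_fin]
    omega
  · intro z hz
    rw [SimpleGraph.Walk.edges_map, List.mem_map] at hz
    obtain ⟨z', hz', rfl⟩ := hz
    have := SimpleGraph.Walk.edges_subset_edgeSet _ hz'
    induction z' with | _ a b =>
    rw [SimpleGraph.mem_edgeSet] at this
    change s(e a, e b) ∈ _
    rcases key a b this with rfl | rfl
    · simpa using mk_succPerm_mem e (e a)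
    · rw [Sym2.eq_swap]; simpa using mk_succPerm_mem e (e b)

/-- A function which depends on disjoint blocks of coordinates averages as a product. -/
lemma sum_prod_blocks {C W T : Type*} [Fintype C] [DecidableEq C] [Fintype W] [DecidableEq W]
    [Fintype T] [DecidableEq T] {α : Type*} [Fintype α] (F : W × T → C)
    (hF : Function.Injective F) (φ : (T → α) → ℝ) :
    (∑ g : C → α, ∏ w, φ fun t => g (F (w, t))) * (∑ _ : T → α, (1 : ℝ)) ^ Fintype.card W
      = (∑ p : T → α, φ p) ^ Fintype.card W * ∑ _ : C → α, (1 : ℝ) := by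
  classical
  let E : (C → α) ≃ (W → T → α) × ({c // c ∉ Set.range F} → α) :=
    (Equiv.arrowCongr (((Equiv.ofInjective F hF).sumCongr (Equiv.refl _)).trans
      (Equiv.Set.sumCompl (Set.range F))).symm (Equiv.refl α)).trans
      ((Equiv.sumArrowEquivProdArrow _ _ _).trans
        ((Equiv.curry W T α).prodCongr (Equiv.refl _)))
  have hE : ∀ g : C → α, ∀ w, (E g).1 w = fun t => g (F (w, t)) := by
    intro g w; funext t; rfl
  have gen : ∀ ψ : (T → α) → ℝ, ∑ g : C → α, ∏ w, ψ (fun t => g (F (w, t)))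
      = (∑ p : T → α, ψ p) ^ Fintype.card W * ∑ g : {c // c ∉ Set.range F} → α, (1 : ℝ) := by
    intro ψ
    rw [← Equiv.sum_comp E.symm, Fintype.sum_prod_type]
    have : ∀ a b, ∏ w, ψ (fun t => E.symm (a, b) (F (w, t))) = ∏ w, ψ (a w) := by
      intro a b
      refine prod_congr rfl fun w _ => ?_
      rw [← hE, Equiv.apply_symm_apply]
    simp only [this]
    have h2 := prod_univ_sum (ι := W) (κ := fun _ => T → α) (fun _ => univ) (fun _ p => ψ p)
    rw [Fintype.piFinset_univ, prod_const, card_univ] at h2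
    rw [h2, sum_mul]
    refine sum_congr rfl fun a _ => ?_
    rw [mul_sum]; simp
  have h1 := gen (fun _ => 1)
  simp only [prod_const_one] at h1
  rw [gen φ, h1]; ring

/-- A Chernoff bound for the lower tail, in counting form: among all colourings of `C`, few have
substantially fewer than the expected number of blocks coloured constantly by `c`. -/
lemma card_lower_tail {C W T : Type*} [Fintype C] [DecidableEq C] [Fintype W] [DecidableEq W]
    [Fintype T] [DecidableEq T] {α : Type*} [Fintype α] [DecidableEq α] (F : W × T → C)
    (hF : Function.Injective F) (c : α) {δ : ℝ} (hδ : 0 ≤ δ) (hδ1 : δ ≤ 1) :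
    ((univ.filter fun g : C → α => ((univ.filter fun w => ∀ t, g (F (w, t)) = c).card : ℝ)
      ≤ (1 / (Fintype.card α : ℝ) ^ Fintype.card T - δ) * Fintype.card W).card : ℝ)
      ≤ Real.exp (-(δ ^ 2 / 4) * Fintype.card W) *
        (Fintype.card α : ℝ) ^ Fintype.card C := by
  set m := Fintype.card W
  set q : ℝ := (Fintype.card α : ℝ) ^ Fintype.card T with hq
  have hα : 0 < (Fintype.card α : ℝ) := by
    have : Nonempty α := ⟨c⟩
    exact_mod_cast Fintype.card_pos
  have hα1 : 1 ≤ (Fintype.card α : ℝ) := by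
    have : Nonempty α := ⟨c⟩
    exact_mod_cast Nat.one_le_iff_ne_zero.2 Fintype.card_ne_zero
  have hq0 : 0 < q := by positivity
  have hq1 : 1 ≤ q := one_le_pow₀ hα1
  set lam := δ / 2 with hlam
  let φ : (T → α) → ℝ := fun p => if ∀ t, p t = c then Real.exp (-lam) else 1
  have hφ0 : ∀ p, 0 < φ p := by
    intro p; simp only [φ]; split_ifs <;> positivity
  have hprod : ∀ g : C → α, ∏ w, φ (fun t => g (F (w, t)))
      = Real.exp (-lam * (univ.filter fun w => ∀ t, g (F (w, t)) = c).card) := by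
    intro g
    simp only [φ]
    rw [prod_ite, prod_const, prod_const_one, mul_one, ← Real.exp_nat_mul]
    ring_nf
  have hsumφ : ∑ p : T → α, φ p = q - (1 - Real.exp (-lam)) := by
    have h1 : ∀ p : T → α, φ p = 1 - if p = (fun _ => c) then 1 - Real.exp (-lam) else 0 := by
      intro p
      simp only [φ, funext_iff]
      split_ifs <;> ring
    simp only [h1, sum_sub_distrib, sum_ite_eq', mem_univ, if_true]
    simp [hq]
  have hcard : ∑ p : T → α, (1 : ℝ) = q := by simp [hq]
  have hcardC : ∑ g : C → α, (1 : ℝ) = (Fintype.card α : ℝ) ^ Fintype.card C := by simp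
  have hmain := sum_prod_blocks F hF φ
  rw [hcard, hcardC, hsumφ] at hmain
  set N := (Fintype.card α : ℝ) ^ Fintype.card C
  have hN : 0 < N := by positivity
  have hexp : 1 - Real.exp (-lam) ≥ lam - lam ^ 2 := by
    have := Real.abs_exp_sub_one_sub_id_le (x := -lam) (by
      rw [abs_neg, abs_of_nonneg (by positivity)]; linarith)
    have := (abs_le.1 this).2
    nlinarith
  have hS : ∑ g : C → α, ∏ w, φ (fun t => g (F (w, t)))
      ≤ Real.exp (-(lam - lam ^ 2) / q * m) * N := by
    have h2 : (q - (1 - Real.exp (-lam))) ^ m ≤ q ^ m * Real.exp (-(lam - lam ^ 2) / q * m) := by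
      have h3 : q - (1 - Real.exp (-lam)) ≤ q * Real.exp (-(lam - lam ^ 2) / q) := by
        have h4 := Real.add_one_le_exp (-(lam - lam ^ 2) / q)
        calc q - (1 - Real.exp (-lam)) ≤ q - (lam - lam ^ 2) := by linarith
          _ = q * (-(lam - lam ^ 2) / q + 1) := by field_simp; ring
          _ ≤ _ := by gcongr
      have h5 : 0 ≤ q - (1 - Real.exp (-lam)) := by
        have := Real.exp_pos (-lam); linarith
      calc _ ≤ (q * Real.exp (-(lam - lam ^ 2) / q)) ^ m := pow_le_pow_left₀ h5 h3 m
        _ = _ := by rw [mul_pow, ← Real.exp_nat_mul]; ring_nf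
    have hqm : 0 < q ^ m := by positivity
    refine le_of_mul_le_mul_right ?_ hqm
    rw [hmain]
    calc _ ≤ (q ^ m * Real.exp (-(lam - lam ^ 2) / q * m)) * N := by gcongr
      _ = _ := by ring
  set B := univ.filter fun g : C → α => ((univ.filter fun w => ∀ t, g (F (w, t)) = c).card : ℝ)
      ≤ (1 / q - δ) * m
  have hB : (B.card : ℝ) * Real.exp (-lam * ((1 / q - δ) * m))
      ≤ Real.exp (-(lam - lam ^ 2) / q * m) * N := by
    refine le_trans ?_ hS
    rw [← nsmul_eq_mul, ← sum_const]
    calc _ ≤ ∑ g ∈ B, ∏ w, φ (fun t => g (F (w, t))) := by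
          refine sum_le_sum fun g hg => ?_
          rw [hprod]
          have := (mem_filter.1 hg).2
          apply Real.exp_le_exp.2
          have hl : 0 ≤ lam := by positivity
          nlinarith
      _ ≤ _ := sum_le_sum_of_subset_of_nonneg (subset_univ _) fun g _ _ =>
          prod_nonneg fun w _ => (hφ0 _).le
  have hpos := Real.exp_pos (-lam * ((1 / q - δ) * m))
  refine le_of_mul_le_mul_right (hB.trans ?_) hpos
  rw [mul_right_comm, ← Real.exp_add]
  gcongr
  have hm : (0 : ℝ) ≤ m := by positivity
  have hiq : 1 / q ≤ 1 := by rw [div_le_one hq0]; exact hq1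
  have : -(lam - lam ^ 2) / q ≤ -(δ ^ 2 / 4) + -lam * (1 / q - δ) := by
    have h6 : -(lam - lam ^ 2) / q = -lam * (1/q) + lam ^ 2 * (1 / q) := by ring
    rw [h6]
    have h7 : lam ^ 2 * (1 / q) ≤ lam ^ 2 * 1 := by gcongr
    have h8 : lam ^ 2 = δ ^ 2 / 4 := by rw [hlam]; ring
    have h9 : lam * δ = δ ^ 2 / 2 := by rw [hlam]; ring
    nlinarith
  nlinarith

/-- A matrix of naturals with constant positive row and column sums has a positive transversal. -/
lemma exists_perm_pos {V : Type*} [Fintype V] [DecidableEq V] (M : V → V → ℕ) (D : ℕ)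
    (hD : 0 < D) (hr : ∀ u, ∑ v, M u v = D) (hc : ∀ v, ∑ u, M u v = D) :
    ∃ π : Equiv.Perm V, ∀ u, 0 < M u (π u) := by
  classical
  have hall : ∀ s : Finset V, s.card ≤ (s.biUnion fun u => univ.filter fun v => 0 < M u v).card := by
    intro s
    set t := s.biUnion fun u => univ.filter fun v => 0 < M u v with ht
    have h1 : s.card * D ≤ t.card * D := by
      calc s.card * D = ∑ u ∈ s, ∑ v, M u v := by simp [hr]
        _ = ∑ u ∈ s, ∑ v ∈ t, M u v := by
            refine sum_congr rfl fun u hu => ?_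
            symm
            refine sum_subset (subset_univ _) fun v _ hv => ?_
            by_contra h
            exact hv (mem_biUnion.2 ⟨u, hu, by simp [Nat.pos_of_ne_zero h]⟩)
        _ = ∑ v ∈ t, ∑ u ∈ s, M u v := sum_comm
        _ ≤ ∑ v ∈ t, ∑ u, M u v :=
            sum_le_sum fun v _ => sum_le_sum_of_subset (subset_univ _)
        _ = t.card * D := by simp [hc]
    exact Nat.le_of_mul_le_mul_right h1 hD
  obtain ⟨f, hf, hf'⟩ := (Finset.all_card_le_biUnion_card_iff_exists_injective _).1 hall
  refine ⟨Equiv.ofBijective f (Finite.injective_iff_bijective.1 hf), fun u => ?_⟩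
  simpa using hf' u

/-- A matrix of naturals with constant row and column sums is covered by permutations. -/
lemma exists_perms_of_sum_eq {V : Type*} [Fintype V] [DecidableEq V] (D : ℕ) :
    ∀ M : V → V → ℕ, (∀ u, ∑ v, M u v = D) → (∀ v, ∑ u, M u v = D) →
    ∃ π : Fin D → Equiv.Perm V, ∀ u v, 0 < M u v → ∃ t, π t u = v := by
  induction D with
  | zero =>
    intro M hr _
    refine ⟨Fin.elim0, fun u v h => ?_⟩
    have := (sum_eq_zero_iff.1 (hr u)) v (mem_univ _)
    omega
  | succ D ih =>
    intro M hr hc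
    obtain ⟨π, hπ⟩ := exists_perm_pos M (D + 1) (by omega) hr hc
    have hle : ∀ u v, (if π u = v then 1 else 0) ≤ M u v := by
      intro u v
      split_ifs with h
      · subst h; exact hπ u
      · omega
    obtain ⟨ρ, hρ⟩ := ih (fun u v => M u v - if π u = v then 1 else 0)
      (by
        intro u
        rw [sum_tsub_distrib _ (fun v _ => hle u v), hr]; simp)
      (by
        intro v
        rw [sum_tsub_distrib _ (fun u _ => hle u v), hc]
        have : ∑ u, (if π u = v then 1 else 0) = 1 := by
          rw [← Equiv.sum_comp π.symm]; simp
        rw [this]; simp)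
    refine ⟨Fin.cons π ρ, fun u v huv => ?_⟩
    by_cases h : π u = v
    · exact ⟨0, by simpa using h⟩
    · obtain ⟨t, ht⟩ := hρ u v (by simpa [h] using huv)
      exact ⟨t.succ, by simpa using ht⟩

/-- A matrix of naturals with row and column sums at most `D` is dominated by one whose row and
column sums are all `D`. -/
lemma exists_dominating {V : Type*} [Fintype V] [DecidableEq V] (D : ℕ) (k : ℕ) :
    ∀ M : V → V → ℕ, (∀ u, ∑ v, M u v ≤ D) → (∀ v, ∑ u, M u v ≤ D) →
    Fintype.card V * D - ∑ u, ∑ v, M u v ≤ k →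
    ∃ M' : V → V → ℕ, (∀ u v, M u v ≤ M' u v) ∧ (∀ u, ∑ v, M' u v = D) ∧
      ∀ v, ∑ u, M' u v = D := by
  induction k with
  | zero =>
    intro M hr hc hk
    refine ⟨M, fun _ _ => le_rfl, ?_, ?_⟩
    · have h : ∑ u, ∑ v, M u v = ∑ u : V, D := by
        refine le_antisymm (sum_le_sum fun u _ => hr u) ?_
        simp only [sum_const, card_univ, smul_eq_mul]; omega
      exact fun u => (sum_eq_sum_iff_of_le fun u _ => hr u).1 h u (mem_univ _)
    · have h : ∑ v, ∑ u, M u v = ∑ u : V, D := by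
        refine le_antisymm (sum_le_sum fun u _ => hc u) ?_
        rw [sum_comm]
        simp only [sum_const, card_univ, smul_eq_mul]; omega
      exact fun u => (sum_eq_sum_iff_of_le fun u _ => hc u).1 h u (mem_univ _)
  | succ k ih =>
    intro M hr hc hk
    by_cases hk' : Fintype.card V * D - ∑ u, ∑ v, M u v ≤ k
    · exact ih M hr hc hk'
    have hlt : ∑ u, ∑ v, M u v < ∑ u : V, D := by
      simp only [sum_const, card_univ, smul_eq_mul]; omega
    obtain ⟨a, -, ha⟩ := exists_lt_of_sum_lt hlt
    rw [sum_comm] at hlt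
    obtain ⟨b, -, hb⟩ := exists_lt_of_sum_lt hlt
    let M1 : V → V → ℕ := fun u v => M u v + if u = a ∧ v = b then 1 else 0
    have hr1 : ∀ u, ∑ v, M1 u v = (∑ v, M u v) + if u = a then 1 else 0 := by
      intro u; simp only [M1, sum_add_distrib]
      by_cases h : u = a <;> simp [h]
    have hc1 : ∀ v, ∑ u, M1 u v = (∑ u, M u v) + if v = b then 1 else 0 := by
      intro u; simp only [M1, sum_add_distrib]
      by_cases h : u = b <;> simp [h]
    obtain ⟨M', h1, h2, h3⟩ := ih M1
      (by
        intro u; rw [hr1]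
        split_ifs with h
        · subst h; omega
        · exact hr u)
      (by
        intro u; rw [hc1]
        split_ifs with h
        · subst h; omega
        · exact hc u)
      (by
        have : ∑ u, ∑ v, M1 u v = ∑ u, ∑ v, M u v + 1 := by
          simp only [hr1, sum_add_distrib]; simp
        omega)
    exact ⟨M', fun u v => (Nat.le_add_right _ _).trans (h1 u v), h2, h3⟩

/-- König's edge colouring theorem, in terms of permutations: a relation with out- and in-degrees
at most `D` is covered by `D` permutations. -/
lemma exists_perms_cover {V : Type*} [Fintype V] [DecidableEq V] (H : V → V → Prop)
    [∀ u v, Decidable (H u v)] (D : ℕ) (hr : ∀ u, (univ.filter fun v => H u v).card ≤ D)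
    (hc : ∀ v, (univ.filter fun u => H u v).card ≤ D) :
    ∃ π : Fin D → Equiv.Perm V, ∀ u v, H u v → ∃ t, π t u = v := by
  obtain ⟨M', h1, h2, h3⟩ := exists_dominating D _ (fun u v => if H u v then 1 else 0)
    (by intro u; simpa using hr u) (by intro v; simpa using hc v) le_rfl
  obtain ⟨π, hπ⟩ := exists_perms_of_sum_eq D M' h2 h3
  refine ⟨π, fun u v huv => hπ u v ?_⟩
  have := h1 u v
  rw [if_pos huv] at this
  omega

/-- Sorting by an injective key makes elements with consecutive keys consecutive. -/
lemma exists_order_of_key {V : Type*} [Fintype V] [DecidableEq V] {n : ℕ} [NeZero n]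
    (hn : Fintype.card V = n) (key : V → ℕ) (hkey : Function.Injective key) :
    ∃ e : Fin n ≃ V, ∀ u v, key v = key u + 1 → succPerm e u = v := by
  have hS : (univ.image key).card = n := by
    rw [card_image_of_injective _ hkey, card_univ, hn]
  let o := (univ.image key).orderIsoOfFin hS
  have hex : ∀ j, ∃ v, key v = o j := by
    intro j
    obtain ⟨v, -, hv⟩ := mem_image.1 (o j).2
    exact ⟨v, hv⟩
  choose g hg using hex
  have hginj : Function.Injective g := by
    intro a b hab
    apply o.injective
    apply Subtype.ext
    rw [← hg, ← hg, hab]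
  have hgb : Function.Bijective g := by
    rw [Fintype.bijective_iff_injective_and_card]
    exact ⟨hginj, by simp [hn]⟩
  have hmono : ∀ a b, a < b ↔ key (g a) < key (g b) := by
    intro a b
    rw [hg, hg, Subtype.coe_lt_coe, o.lt_iff_lt]
  refine ⟨Equiv.ofBijective g hgb, fun u v huv => ?_⟩
  obtain ⟨a, rfl⟩ := hgb.2 u
  obtain ⟨b, rfl⟩ := hgb.2 v
  have hab : a < b := (hmono a b).2 (by omega)
  have hval : b.val = a.val + 1 := by
    by_contra hne
    have hlt : a.val + 1 < b.val := by have := Fin.lt_def.1 hab; omega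
    let c : Fin n := ⟨a.val + 1, by omega⟩
    have h1 := (hmono a c).1 (by simp [Fin.lt_def, c])
    have h2 := (hmono c b).1 (by simpa [Fin.lt_def, c] using hlt)
    omega
  have hb : b = a + 1 := by
    apply Fin.ext
    have hbn := b.isLt
    have h2 : 2 ≤ n := by omega
    rw [Fin.val_add, Fin.val_one', Nat.mod_eq_of_lt (a := 1) (by omega), hval,
      Nat.mod_eq_of_lt (by omega)]
  have := succPerm_apply (Equiv.ofBijective g hgb) a
  simp only [Equiv.ofBijective_apply] at this
  rw [this, hb]

/-- A linear forest, given as the restriction of a permutation to an acyclic set of active vertices,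
extends to a cyclic order. -/
lemma exists_order_of_acyclic {V : Type*} [Fintype V] [DecidableEq V] {n : ℕ} [NeZero n]
    (hn : Fintype.card V = n) (π : Equiv.Perm V) (A : Finset V)
    (hA : ∀ v, ∃ k : ℕ, π.symm^[k + 1] v ∉ A) :
    ∃ e : Fin n ≃ V, ∀ u ∈ A, succPerm e u = π u := by
  classical
  let dist : V → ℕ := fun v => Nat.find (hA v)
  let root : V → V := fun v => π.symm^[dist v] v
  have hback : ∀ (k : ℕ) (u : V), π.symm^[k + 1] (π u) = π.symm^[k] u := by
    intro k u; simp [Function.iterate_succ_apply]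
  have hdist : ∀ u ∈ A, dist (π u) = dist u + 1 := by
    intro u hu
    have h0 : ¬ π.symm^[0 + 1] (π u) ∉ A := by rw [hback]; simpa using hu
    have h2 : ∃ k : ℕ, π.symm^[k + 1 + 1] (π u) ∉ A := by
      obtain ⟨k, hk⟩ := hA u
      exact ⟨k, by rwa [hback]⟩
    have := Nat.find_comp_succ (hA (π u)) h2 h0
    simp only [dist]
    rw [this]
    congr 1
    simp only [hback]
  have hroot : ∀ u ∈ A, root (π u) = root u := by
    intro u hu
    simp only [root, hdist u hu, hback]
  obtain ⟨idx⟩ : Nonempty (V ≃ Fin n) := ⟨Fintype.equivFinOfCardEq hn⟩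
  set N := univ.sup dist + 1 with hN
  have hlt : ∀ v, dist v < N := fun v => Nat.lt_succ_of_le (le_sup (mem_univ v))
  obtain ⟨e, he⟩ := exists_order_of_key hn (fun v => dist v + N * (idx (root v)).val) (by
    intro u v huv
    simp only at huv
    have h1 : dist u = dist v := by
      have := congrArg (· % N) huv
      simpa [Nat.add_mul_mod_self_left, Nat.mod_eq_of_lt (hlt _)] using this
    have h2 : root u = root v := by
      rw [h1] at huv
      have h3 := Nat.eq_of_mul_eq_mul_left (by omega : 0 < N) (Nat.add_left_cancel huv)
      exact idx.injective (Fin.ext h3)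
    simp only [root, h1] at h2
    exact (π.symm.injective.iterate _) h2)
  refine ⟨e, fun u hu => he u (π u) ?_⟩
  rw [hdist u hu, hroot u hu]; ring

lemma eventually_pow_mul_exp_lt_one (A : ℝ) (k : ℕ) {c : ℝ} (hc : 0 < c) :
    ∀ᶠ n : ℕ in atTop, A * (n : ℝ) ^ k * Real.exp (-c * n) < 1 := by
  have h := tendsto_pow_const_mul_const_pow_of_abs_lt_one k (r := Real.exp (-c)) (by
    rw [abs_of_pos (Real.exp_pos _), Real.exp_lt_one_iff]; linarith)
  have h2 := h.const_mul A
  rw [mul_zero] at h2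
  filter_upwards [h2.eventually (gt_mem_nhds one_pos)] with n hn
  rw [← Real.exp_nat_mul] at hn
  rw [mul_assoc, mul_comm (-c)]
  exact hn

/-- In a dense regular graph the vertices can be coloured so that every colour appears about
equally often in each neighbourhood. -/
lemma exists_balanced_colouring (K : ℕ) [NeZero K] {δ : ℝ} (hδ : 0 < δ) (hδ1 : δ ≤ 1) :
    ∃ n₀ : ℕ, ∀ (V : Type) [Fintype V] [DecidableEq V] (G : SimpleGraph V) [DecidableRel G.Adj]
      (d : ℕ), n₀ ≤ Fintype.card V → G.IsRegularOfDegree d → (Fintype.card V : ℝ) / 2 ≤ d →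
      ∃ f : V → ZMod K, ∀ v j, (1 / (K : ℝ) - δ) * d ≤ (univ.filter fun w => G.Adj v w ∧ f w = j).card := by
  have hc : 0 < δ ^ 2 / 8 := by positivity
  obtain ⟨n₀, hn₀⟩ := eventually_atTop.1 (eventually_pow_mul_exp_lt_one K 1 hc)
  refine ⟨n₀, fun V _ _ G _ d hn hG hd => ?_⟩
  by_contra hcon
  push Not at hcon
  set n := Fintype.card V
  let B : V → ZMod K → Finset (V → ZMod K) := fun v j =>
    univ.filter fun f => ((univ.filter fun w => G.Adj v w ∧ f w = j).card : ℝ) ≤ (1 / (K : ℝ) - δ) * d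
  have hB : ∀ v j, ((B v j).card : ℝ) ≤ Real.exp (-(δ ^ 2 / 8) * n) * (K : ℝ) ^ n := by
    intro v j
    have h := card_lower_tail (C := V) (W := {w // w ∈ G.neighborFinset v}) (T := Unit)
      (fun p => p.1.1) (by
        rintro ⟨a, ⟨⟩⟩ ⟨b, ⟨⟩⟩ h
        exact Prod.ext (Subtype.ext h) rfl) j hδ.le hδ1
    have hW : Fintype.card {w // w ∈ G.neighborFinset v} = d := by
      rw [Fintype.card_coe, SimpleGraph.card_neighborFinset_eq_degree, hG.degree_eq]
    rw [hW, Fintype.card_unit, pow_one, ZMod.card] at h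
    have heq : ∀ f : V → ZMod K, (univ.filter fun w => G.Adj v w ∧ f w = j).card =
        (univ.filter fun w : {w // w ∈ G.neighborFinset v} => ∀ _ : Unit, f w = j).card := by
      intro f
      symm
      refine card_bij (fun w _ => w.1) ?_ ?_ ?_
      · intro w hw
        have h1 := w.2
        rw [SimpleGraph.mem_neighborFinset] at h1
        simp only [mem_filter, mem_univ, true_and] at hw ⊢
        exact ⟨h1, hw ()⟩
      · intro a _ b _ h; exact Subtype.ext h
      · intro w hw
        simp only [mem_filter, mem_univ, true_and] at hw
        exact ⟨⟨w, by simpa using hw.1⟩, by simpa using hw.2, rfl⟩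
    simp only [B, heq]
    refine h.trans ?_
    gcongr ?_ * _
    apply Real.exp_le_exp.2
    nlinarith
  have hcov : (univ : Finset (V → ZMod K)) ⊆ univ.biUnion fun v => univ.biUnion fun j => B v j := by
    intro f _
    obtain ⟨v, j, h⟩ := hcon f
    simp only [mem_biUnion, mem_univ, true_and]
    exact ⟨v, j, by simp only [B, mem_filter, mem_univ, true_and]; exact h.le⟩
  have hcard := card_le_card hcov
  rw [card_univ, Fintype.card_fun, ZMod.card] at hcard
  have h1 : ((K : ℝ) ^ n) ≤ n * (K * (Real.exp (-(δ ^ 2 / 8) * n) * (K : ℝ) ^ n)) := by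
    calc ((K : ℝ) ^ n) = ((K ^ n : ℕ) : ℝ) := by push_cast; rfl
      _ ≤ ∑ v : V, ∑ j : ZMod K, ((B v j).card : ℝ) := by
          exact_mod_cast hcard.trans (card_biUnion_le.trans
            (sum_le_sum fun v _ => card_biUnion_le))
      _ ≤ ∑ v : V, ∑ j : ZMod K, Real.exp (-(δ ^ 2 / 8) * n) * (K : ℝ) ^ n :=
          sum_le_sum fun v _ => sum_le_sum fun j _ => hB v j
      _ = _ := by simp [n, ZMod.card]
  have hK : 0 < (K : ℝ) ^ n := by
    have : 0 < (K : ℝ) := by exact_mod_cast Nat.pos_of_ne_zero (NeZero.ne K)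
    positivity
  have h2 := hn₀ n hn
  nlinarith

lemma card_filter_natCast_eq_le (D K : ℕ) [NeZero K] (r : ZMod K) :
    (univ.filter fun t : Fin D => ((t : ℕ) : ZMod K) = r).card ≤ D / K + 1 := by
  have hK : 0 < K := Nat.pos_of_ne_zero (NeZero.ne K)
  rw [← card_range (D / K + 1)]
  refine card_le_card_of_injOn (fun t => (t : ℕ) / K) ?_ ?_
  · intro t _
    simp only [coe_range, Set.mem_Iio]
    exact Nat.lt_succ_of_le (Nat.div_le_div_right t.2.le)
  · intro a ha b hb h
    simp only [coe_filter, mem_univ, true_and, Set.mem_ofPred_eq] at ha hb h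
    have h1 : (a : ℕ) % K = (b : ℕ) % K := by
      have := ha.trans hb.symm
      rwa [ZMod.natCast_eq_natCast_iff'] at this
    apply Fin.ext
    rw [← Nat.div_add_mod (a : ℕ) K, ← Nat.div_add_mod (b : ℕ) K, h, h1]

/-- A balanced colouring of the vertices of a regular graph with colours in `ZMod K` yields a
decomposition of most of the graph into linear forests, each contained in a cyclic order of the
vertices. -/
lemma exists_linearForests_of_colouring {V : Type*} [Fintype V] [DecidableEq V] {n : ℕ} [NeZero n]
    (hn : Fintype.card V = n) (G : SimpleGraph V) [DecidableRel G.Adj] {d : ℕ}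
    (hG : G.IsRegularOfDegree d) {h K : ℕ} (hK : K = 2 * h + 1) [Fact K.Prime] (f : V → ZMod K)
    (a D : ℕ) (hD : D = d - 2 * h * a)
    (hf : ∀ v j, a ≤ (univ.filter fun w => G.Adj v w ∧ f w = j).card) :
    ∃ (F : Fin h × Fin D → Finset (Sym2 V)) (e : Fin h × Fin D → Fin n ≃ V),
      (∀ i, F i ⊆ cycEdges (e i)) ∧ (∀ i, ∀ z ∈ F i, z ∈ G.edgeSet) ∧
      (∀ i j, i ≠ j → Disjoint (F i) (F j)) ∧
      ∀ v, (univ.filter fun i => ¬ (s(v, succPerm (e i) v) ∈ F i ∧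
        s((succPerm (e i)).symm v, v) ∈ F i)).card ≤ 2 * (h * (D - a + (D / K + 1))) := by
  classical
  have hsum : ∀ v, ∑ j : ZMod K, (univ.filter fun w => G.Adj v w ∧ f w = j).card = d := by
    intro v
    rw [← hG.degree_eq v, ← SimpleGraph.card_neighborFinset_eq_degree,
      card_eq_sum_card_fiberwise (f := f) (t := univ) (by simp)]
    refine sum_congr rfl fun j _ => ?_
    congr 1; ext w; simp
  have hup : ∀ v j, (univ.filter fun w => G.Adj v w ∧ f w = j).card ≤ D := by
    intro v j
    have h1 := hsum v
    rw [← add_sum_erase _ _ (mem_univ j)] at h1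
    have h2 : 2 * h * a ≤ ∑ j ∈ univ.erase j, (univ.filter fun w => G.Adj v w ∧ f w = j).card := by
      have := card_nsmul_le_sum (univ.erase j)
        (fun j => (univ.filter fun w => G.Adj v w ∧ f w = j).card) a (fun j _ => hf v j)
      rw [card_erase_of_mem (mem_univ _), card_univ, ZMod.card, smul_eq_mul] at this
      rwa [show K - 1 = 2 * h by omega] at this
    omega
  let st : Fin h → ZMod K := fun s => ((s.val + 1 : ℕ) : ZMod K)
  have hst0 : ∀ s, st s ≠ 0 := by
    intro s hs
    rw [ZMod.natCast_eq_zero_iff] at hs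
    have := Nat.le_of_dvd (by omega) hs
    have := s.2
    omega
  have hstinj : ∀ s s', st s = st s' → s = s' := by
    intro s s' hs
    rw [ZMod.natCast_eq_natCast_iff', Nat.mod_eq_of_lt (by omega), Nat.mod_eq_of_lt (by omega)] at hs
    exact Fin.ext (by omega)
  have hstadd : ∀ s s', st s + st s' ≠ 0 := by
    intro s s' hs
    rw [← Nat.cast_add, ZMod.natCast_eq_zero_iff] at hs
    have := Nat.le_of_dvd (by omega) hs
    have := s.2
    have := s'.2
    omega
  let H : Fin h → V → V → Prop := fun s u v => G.Adj u v ∧ f v = f u + st s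
  have hHr : ∀ s u, (univ.filter fun v => H s u v).card ≤ D := fun s u => hup u _
  have hcol : ∀ s v, (univ.filter fun u => H s u v) =
      univ.filter fun w => G.Adj v w ∧ f w = f v - st s := by
    intro s v
    ext u
    simp only [H, mem_filter, mem_univ, true_and, G.adj_comm u v, eq_sub_iff_add_eq,
      eq_comm (a := f v)]
  have hHc : ∀ s v, (univ.filter fun u => H s u v).card ≤ D := by
    intro s v; rw [hcol]; exact hup v _
  choose π hπ using fun s => exists_perms_cover (H s) D (hHr s) (hHc s)
  have hT : ∀ s u v, ∃ t : ℕ, H s u v → ∃ ht : t < D, π s ⟨t, ht⟩ u = v := by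
    intro s u v
    by_cases hh : H s u v
    · obtain ⟨t, ht⟩ := hπ s u v hh
      exact ⟨t, fun _ => ⟨t.2, ht⟩⟩
    · exact ⟨0, fun h' => absurd h' hh⟩
  choose T hT using hT
  let A : Fin h × Fin D → Finset V := fun i => univ.filter fun u =>
    H i.1 u (π i.1 i.2 u) ∧ T i.1 u (π i.1 i.2 u) = i.2 ∧ f u ≠ ((i.2 : ℕ) : ZMod K)
  have hAmem : ∀ i u, u ∈ A i ↔
      H i.1 u (π i.1 i.2 u) ∧ T i.1 u (π i.1 i.2 u) = i.2 ∧ f u ≠ ((i.2 : ℕ) : ZMod K) := by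
    intro i u; simp [A]
  have hacyc : ∀ i v, ∃ k : ℕ, (π i.1 i.2).symm^[k + 1] v ∉ A i := by
    intro i v
    by_contra hcon
    push Not at hcon
    have hfk : ∀ k : ℕ, f ((π i.1 i.2).symm^[k] v) = f v - k * st i.1 := by
      intro k
      induction k with
      | zero => simp
      | succ k ih =>
        have h1 := ((hAmem _ _).1 (hcon k)).1.2
        rw [Function.iterate_succ_apply', Equiv.apply_symm_apply, ih] at h1
        rw [Function.iterate_succ_apply']
        push_cast
        linear_combination -h1
    set r : ZMod K := (f v - ((i.2 : ℕ) : ZMod K)) * (st i.1)⁻¹ with hr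
    have h2 := ((hAmem _ _).1 (hcon (r.val + K - 1))).2.2
    have hKpos : 0 < K := by omega
    rw [show r.val + K - 1 + 1 = r.val + K by omega, hfk] at h2
    apply h2
    push_cast
    rw [ZMod.natCast_zmod_val, ZMod.natCast_self, hr, add_zero, mul_assoc,
      inv_mul_cancel₀ (hst0 _)]
    ring
  choose e he using fun i => exists_order_of_acyclic hn (π i.1 i.2) (A i) (hacyc i)
  have hcount : ∀ r : ZMod K, ∀ s : Fin h, ∀ (g : V → Fin D → Prop) (S : Finset V), a ≤ S.card →
      (∀ w ∈ S, ∃ t, g w t) → (∀ w w' t, g w t → g w' t → w = w') →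
      (univ.filter fun t : Fin D => ¬ ∃ w ∈ S, g w t ∧ r ≠ ((t : ℕ) : ZMod K)).card
        ≤ D - a + (D / K + 1) := by
    intro r s g S hS hg1 hg2
    have h1 : S.card ≤ (univ.filter fun t : Fin D => ∃ w ∈ S, g w t).card := by
      choose τ hτ using hg1
      rw [← card_attach]
      refine card_le_card_of_injOn (fun w => τ w.1 w.2) ?_ ?_
      · intro w _
        simp only [coe_filter, mem_univ, true_and, Set.mem_ofPred_eq]
        exact ⟨w.1, w.2, hτ w.1 w.2⟩
      · intro w _ w' _ hww
        have := hτ w'.1 w'.2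
        simp only at hww
        rw [← hww] at this
        exact Subtype.ext (hg2 _ _ _ (hτ w.1 w.2) this)
    have h2 := card_filter_natCast_eq_le D K r
    have h3 := card_filter_add_card_filter_not (s := (univ : Finset (Fin D)))
      (fun t => ∃ w ∈ S, g w t)
    rw [card_univ, Fintype.card_fin] at h3
    have h4 : (univ.filter fun t : Fin D => ¬ ∃ w ∈ S, g w t ∧ r ≠ ((t : ℕ) : ZMod K)) ⊆
        (univ.filter fun t : Fin D => ¬ ∃ w ∈ S, g w t) ∪
        univ.filter fun t : Fin D => ((t : ℕ) : ZMod K) = r := by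
      intro t ht
      simp only [mem_union, mem_filter, mem_univ, true_and] at ht ⊢
      by_contra hcon
      push Not at hcon
      obtain ⟨⟨w, hw, hwt⟩, hr⟩ := hcon
      exact ht ⟨w, hw, hwt, hr.symm⟩
    have h5 := (card_le_card h4).trans (card_union_le _ _)
    omega
  have hprod : ∀ (P : Fin h × Fin D → Prop) [DecidablePred P] (b : ℕ),
      (∀ s, (univ.filter fun t => P (s, t)).card ≤ b) →
      (univ.filter fun i => P i).card ≤ h * b := by
    intro P _ b hb
    have : (univ.filter fun i => P i) =
        univ.biUnion fun s => (univ.filter fun t => P (s, t)).image fun t => (s, t) := by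
      ext ⟨s, t⟩; simp
    rw [this]
    calc _ ≤ ∑ s : Fin h, b :=
          card_biUnion_le.trans (sum_le_sum fun s _ => card_image_le.trans (hb s))
      _ = h * b := by simp
  refine ⟨fun i => (A i).image fun u => s(u, π i.1 i.2 u), e, ?_, ?_, ?_, ?_⟩
  · intro i z hz
    obtain ⟨u, hu, rfl⟩ := mem_image.1 hz
    rw [← he i u hu]
    exact mk_succPerm_mem _ _
  · intro i z hz
    obtain ⟨u, hu, rfl⟩ := mem_image.1 hz
    exact ((hAmem _ _).1 hu).1.1
  · intro i j hij
    rw [disjoint_left]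
    intro z hz hz'
    obtain ⟨u, hu, rfl⟩ := mem_image.1 hz
    obtain ⟨w, hw, hwu⟩ := mem_image.1 hz'
    obtain ⟨⟨-, hu1⟩, hu2, -⟩ := (hAmem _ _).1 hu
    obtain ⟨⟨-, hw1⟩, hw2, -⟩ := (hAmem _ _).1 hw
    rw [Sym2.eq_iff] at hwu
    rcases hwu with ⟨h1, h2⟩ | ⟨h1, h2⟩
    · subst h1
      have h3 : i.1 = j.1 := by
        apply hstinj
        rw [h2] at hw1
        exact add_left_cancel (hu1.symm.trans hw1)
      apply hij
      refine Prod.ext h3 (Fin.ext ?_)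
      rw [← hu2, ← hw2, h2, h3]
    · apply hstadd i.1 j.1
      rw [h2, h1, hu1] at hw1
      linear_combination -hw1
  · intro v
    have hsub : (univ.filter fun i => ¬ (s(v, succPerm (e i) v) ∈ (A i).image (fun u => s(u, π i.1 i.2 u)) ∧
        s((succPerm (e i)).symm v, v) ∈ (A i).image (fun u => s(u, π i.1 i.2 u)))) ⊆
        (univ.filter fun i => ¬ v ∈ A i) ∪ (univ.filter fun i => ¬ (π i.1 i.2).symm v ∈ A i) := by
      intro i hi
      simp only [mem_union, mem_filter, mem_univ, true_and] at hi ⊢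
      by_contra hcon
      push Not at hcon
      obtain ⟨h1, h2⟩ := hcon
      refine hi ⟨mem_image.2 ⟨v, h1, by rw [he i v h1]⟩, mem_image.2 ⟨_, h2, ?_⟩⟩
      have h3 := he i _ h2
      rw [Equiv.apply_symm_apply] at h3 ⊢
      rw [← (Equiv.eq_symm_apply _).2 h3]
    refine (card_le_card hsub).trans ((card_union_le _ _).trans ?_)
    rw [two_mul]
    refine add_le_add (hprod (fun i => ¬ v ∈ A i) _ fun s => ?_)
      (hprod (fun i => ¬ (π i.1 i.2).symm v ∈ A i) _ fun s => ?_)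
    · refine le_trans (card_le_card ?_) (hcount (f v) s
        (fun w t => T s v w = t ∧ π s t v = w) (univ.filter fun w => H s v w) (hf v _) ?_ ?_)
      · intro t ht
        simp only [mem_filter, mem_univ, true_and, hAmem] at ht ⊢
        rintro ⟨w, hw, ⟨h1, h2⟩, h3⟩
        subst h2
        exact ht ⟨hw, h1, h3⟩
      · intro w hw
        obtain ⟨ht, h1⟩ := hT s v w (by simpa using hw)
        exact ⟨_, rfl, h1⟩
      · rintro w w' t ⟨-, h1⟩ ⟨-, h2⟩
        exact h1.symm.trans h2
    · refine le_trans (card_le_card ?_) (hcount (f v - st s) s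
        (fun w t => T s w v = t ∧ π s t w = v) (univ.filter fun w => H s w v)
        (by rw [hcol]; exact hf v _) ?_ ?_)
      · intro t ht
        simp only [mem_filter, mem_univ, true_and, hAmem, Equiv.apply_symm_apply] at ht ⊢
        rintro ⟨w, hw, ⟨h1, h2⟩, h3⟩
        have hw' : (π s t).symm v = w := by rw [← h2, Equiv.symm_apply_apply]
        rw [hw'] at ht
        refine ht ⟨hw, h1, ?_⟩
        rwa [hw.2, add_sub_cancel_right] at h3
      · intro w hw
        obtain ⟨ht, h1⟩ := hT s w v (by simpa using hw)
        exact ⟨_, rfl, h1⟩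
      · rintro w w' t ⟨-, h1⟩ ⟨-, h2⟩
        exact (π s t).injective (h1.trans h2.symm)

set_option maxHeartbeats 1000000 in
/-- Most of a dense regular graph of degree `d` decomposes into about `d / 2` linear forests,
each contained in a cyclic order of the vertices, such that each vertex is an inner vertex of
almost all of them. -/
lemma exists_linearForests {ε : ℝ} (hε : 0 < ε) (hε1 : ε ≤ 1) :
    ∃ n₀ : ℕ, ∀ (V : Type) [Fintype V] [DecidableEq V] (n : ℕ) [NeZero n] (G : SimpleGraph V)
      [DecidableRel G.Adj] (d : ℕ), Fintype.card V = n → n₀ ≤ n → G.IsRegularOfDegree d →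
      (n : ℝ) / 2 ≤ d →
      ∃ (h D : ℕ) (F : Fin h × Fin D → Finset (Sym2 V)) (e : Fin h × Fin D → Fin n ≃ V),
        (∀ i, F i ⊆ cycEdges (e i)) ∧ (∀ i, ∀ z ∈ F i, z ∈ G.edgeSet) ∧
        (∀ i j, i ≠ j → Disjoint (F i) (F j)) ∧
        (∀ v, ((univ.filter fun i => ¬ (s(v, succPerm (e i) v) ∈ F i ∧
          s((succPerm (e i)).symm v, v) ∈ F i)).card : ℝ) ≤ ε * n) ∧
        (d : ℝ) / 2 - ε * n ≤ h * D ∧ (h * D : ℝ) ≤ d / 2 + ε * n := by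
  obtain ⟨K, hK4, hKp⟩ := Nat.exists_infinite_primes (max 3 ⌈4 / ε⌉₊)
  have hK3 : 3 ≤ K := (le_max_left _ _).trans hK4
  have hKε : 4 / ε ≤ K := (Nat.le_ceil _).trans (by exact_mod_cast (le_max_right _ _).trans hK4)
  obtain ⟨h, hh⟩ : Odd K := hKp.odd_of_ne_two (by omega)
  have : Fact K.Prime := ⟨hKp⟩
  have hKpos : (0 : ℝ) < K := by positivity
  have hK1 : (3 : ℝ) ≤ K := by exact_mod_cast hK3
  obtain ⟨δ, hδ⟩ : ∃ δ : ℝ, δ = ε / (8 * K ^ 2) := ⟨_, rfl⟩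
  have hδ0 : 0 < δ := by rw [hδ]; positivity
  have hδK : δ * K ^ 2 = ε / 8 := by rw [hδ]; field_simp
  have hδ1 : δ ≤ 1 := by nlinarith
  obtain ⟨n₁, hn₁⟩ := exists_balanced_colouring K hδ0 hδ1
  refine ⟨max n₁ ⌈8 * (K : ℝ) ^ 2 / ε⌉₊, fun V _ _ n _ G _ d hn hn0 hG hd => ?_⟩
  obtain ⟨f, hf⟩ := hn₁ V G d (by rw [hn]; exact (le_max_left _ _).trans hn0) hG
    (by rw [hn]; exact hd)
  have hnK : 8 * (K : ℝ) ^ 2 / ε ≤ n :=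
    (Nat.le_ceil _).trans (by exact_mod_cast (le_max_right _ _).trans hn0)
  rw [div_le_iff₀ hε] at hnK hKε
  obtain ⟨a, ha⟩ : ∃ a, a = ⌈(1 / (K : ℝ) - δ) * d⌉₊ := ⟨_, rfl⟩
  obtain ⟨D, hD⟩ : ∃ D, D = d - 2 * h * a := ⟨_, rfl⟩
  obtain ⟨F, e, h1, h2, h3, h4⟩ := exists_linearForests_of_colouring hn G hG hh f a D hD
    (fun v j => by rw [ha]; exact Nat.ceil_le.2 (hf v j))
  have hdn : (d : ℝ) ≤ n := by
    have v : V := Fintype.card_pos_iff.1 (hn ▸ Nat.pos_of_ne_zero (NeZero.ne n)) |>.some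
    have := G.degree_lt_card_verts v
    rw [hG.degree_eq, hn] at this
    exact_mod_cast this.le
  have hd0 : (0 : ℝ) ≤ d := by positivity
  have ha1 : (1 / (K : ℝ) - δ) * d ≤ a := by rw [ha]; exact Nat.le_ceil _
  have hKinv : K * (1 / (K : ℝ)) = 1 := by field_simp
  obtain ⟨κ, hκ⟩ : ∃ κ : ℝ, κ = 1 / K := ⟨_, rfl⟩
  rw [← hκ] at ha1 hKinv ha
  have hκ0 : 0 < κ := by rw [hκ]; positivity
  have hδκ : δ ≤ κ := by nlinarith
  have ha2 : (a : ℝ) < (κ - δ) * d + 1 := by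
    rw [ha]; exact Nat.ceil_lt_add_one (mul_nonneg (by linarith) hd0)
  have hhK : (K : ℝ) = 2 * h + 1 := by exact_mod_cast hh
  have hh0 : (0 : ℝ) ≤ h := by positivity
  have hDu : (D : ℝ) ≤ κ * d + 2 * h * (δ * d) := by
    have h5 : (D : ℝ) = max 0 ((d : ℝ) - 2 * h * a) := by
      rw [hD]
      rcases le_total (2 * h * a) d with hle | hle
      · rw [Nat.cast_sub hle, max_eq_right]
        · push_cast; ring
        · have : ((2 * h * a : ℕ) : ℝ) ≤ d := by exact_mod_cast hle
          push_cast at this; linarith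
      · rw [Nat.sub_eq_zero_of_le hle, max_eq_left]
        · simp
        · have : (d : ℝ) ≤ ((2 * h * a : ℕ) : ℝ) := by exact_mod_cast hle
          push_cast at this; linarith
    rw [h5]
    refine max_le (by positivity) ?_
    have := mul_le_mul_of_nonneg_left ha1 (show (0:ℝ) ≤ 2 * h by positivity)
    have h6 : (2 * h : ℝ) = K - 1 := by linarith
    have h7 : (2 * h : ℝ) * (κ * d) = d - κ * d := by rw [h6]; linear_combination d * hKinv
    nlinarith
  have hDl : κ * d - 2 * h ≤ (D : ℝ) := by
    have h5 : (d : ℝ) ≤ D + 2 * h * a := by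
      have : d ≤ D + 2 * h * a := by omega
      exact_mod_cast this
    have h6 : (2 * h : ℝ) * (κ * d) = d - κ * d := by
      rw [show (2 * h : ℝ) = K - 1 by linarith]; linear_combination d * hKinv
    have h7 : 2 * h * (a : ℝ) ≤ 2 * h * (κ * d + 1) := by
      apply mul_le_mul_of_nonneg_left _ (by positivity)
      nlinarith
    nlinarith
  have hδd : δ * d ≤ δ * n := by gcongr
  have hδn : K ^ 2 * (δ * n) = ε * n / 8 := by linear_combination n * hδK
  have hδn0 : 0 ≤ δ * n := by positivity
  have hKδn : K * (δ * n) ≤ K ^ 2 * (δ * n) := by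
    gcongr ?_ * _
    rw [sq]; exact le_mul_of_one_le_left hKpos.le (by linarith)
  have hKn : 8 * (K : ℝ) ≤ ε * n := by
    have : (K : ℝ) ≤ K ^ 2 := by rw [sq]; exact le_mul_of_one_le_left hKpos.le (by linarith)
    linarith
  have hκd : κ * d ≤ κ * n := by gcongr
  have hh2 : (2 * h : ℝ) * h ≤ K ^ 2 := by
    rw [hhK]; nlinarith
  have hhδ : 2 * h * (δ * d) + δ * d ≤ K * (δ * n) := by
    rw [← add_one_mul, ← hhK]; gcongr
  have hδd0 : 0 ≤ δ * d := by positivity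
  have hκd0 : 0 ≤ κ * d := by positivity
  have hκn : κ * n ≤ ε * n / 4 := by
    have : κ ≤ ε / 4 := by nlinarith
    nlinarith
  refine ⟨h, D, F, e, h1, h2, h3, fun v => ?_, ?_, ?_⟩
  · have h5 : ((D - a : ℕ) : ℝ) ≤ K * (δ * n) := by
      rcases le_total a D with hle | hle
      · rw [Nat.cast_sub hle]
        linarith
      · rw [Nat.sub_eq_zero_of_le hle, Nat.cast_zero]; positivity
    have h6 : ((D / K : ℕ) : ℝ) ≤ κ * (κ * n + K * (δ * n)) := by
      refine Nat.cast_div_le.trans ?_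
      rw [div_eq_mul_one_div, ← hκ, mul_comm]
      gcongr ?_ * ?_
      linarith
    have h7 := h4 v
    have h8 : ((univ.filter fun i => ¬ (s(v, succPerm (e i) v) ∈ F i ∧
          s((succPerm (e i)).symm v, v) ∈ F i)).card : ℝ) ≤
        2 * (h * (((D - a : ℕ) : ℝ) + (((D / K : ℕ) : ℝ) + 1))) := by exact_mod_cast h7
    refine h8.trans ?_
    have h9 : (2 * h : ℝ) ≤ K := by linarith
    calc 2 * (h * (((D - a : ℕ) : ℝ) + (((D / K : ℕ) : ℝ) + 1)))
        ≤ K * (K * (δ * n) + (κ * (κ * n + K * (δ * n)) + 1)) := by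
          rw [← mul_assoc]; gcongr
      _ = K ^ 2 * (δ * n) + κ * n + K * (δ * n) + K := by
          linear_combination (κ * n + K * (δ * n)) * hKinv
      _ ≤ ε * n := by linarith
  · have h5 : (h : ℝ) * (κ * d - 2 * h) ≤ h * D := by gcongr
    have h6 : (h : ℝ) * (κ * d) = d / 2 - κ * d / 2 := by
      rw [show (h : ℝ) = (K - 1) / 2 by linarith]; linear_combination d / 2 * hKinv
    linarith
  · have h5 : (h : ℝ) * D ≤ h * (κ * d + 2 * h * (δ * d)) := by gcongr
    have h6 : (h : ℝ) * (κ * d) = d / 2 - κ * d / 2 := by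
      rw [show (h : ℝ) = (K - 1) / 2 by linarith]; linear_combination d / 2 * hKinv
    have h7 : (h : ℝ) * (2 * h * (δ * d)) ≤ K ^ 2 * (δ * n) := by
      calc (h : ℝ) * (2 * h * (δ * d)) = (2 * h ^ 2) * (δ * d) := by ring
        _ ≤ K ^ 2 * (δ * n) := by gcongr; nlinarith
    linarith

/-- A relation all of whose classes are small has a large independent set. -/
lemma exists_independent {W : Type*} [DecidableEq W] (S : Finset W) (r : W → W → Prop)
    [DecidableRel r] (hrefl : ∀ w ∈ S, r w w) (hsymm : ∀ w w', r w w' → r w' w) (k : ℕ)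
    (hk : ∀ w ∈ S, (S.filter fun w' => r w w').card ≤ k) :
    ∃ T ⊆ S, (∀ w ∈ T, ∀ w' ∈ T, r w w' → w = w') ∧ S.card ≤ k * T.card := by
  obtain ⟨T, hT, hmax⟩ := exists_max_image
    (S.powerset.filter fun T => ∀ w ∈ T, ∀ w' ∈ T, r w w' → w = w') card ⟨∅, by simp⟩
  rw [mem_filter, mem_powerset] at hT
  refine ⟨T, hT.1, hT.2, ?_⟩
  have hcov : S ⊆ T.biUnion fun w => S.filter fun w' => r w w' := by
    intro w hw
    by_contra hcon
    simp only [mem_biUnion, mem_filter, not_exists, not_and] at hcon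
    have hwT : w ∉ T := fun h => hcon w h hw (hrefl w hw)
    have h1 := hmax (insert w T) (by
      rw [mem_filter, mem_powerset]
      refine ⟨insert_subset hw hT.1, ?_⟩
      intro a ha b hb hab
      rw [mem_insert] at ha hb
      rcases ha with rfl | ha <;> rcases hb with rfl | hb
      · rfl
      · exact absurd (hsymm _ _ hab) (hcon b hb hw)
      · exact absurd hab (hcon a ha hw)
      · exact hT.2 a ha b hb hab)
    rw [card_insert_of_notMem hwT] at h1
    omega
  calc S.card ≤ ∑ w ∈ T, (S.filter fun w' => r w w').card :=
        (card_le_card hcov).trans card_biUnion_le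
    _ ≤ ∑ w ∈ T, k := sum_le_sum fun w hw => hk w (hT.1 hw)
    _ = k * T.card := by rw [sum_const, smul_eq_mul, mul_comm]

/-- For a random colouring of `ι`, given boundedly overlapping pairs in `ι`, it is very unlikely
that few of them are monochromatic of a given colour. -/
lemma card_few_monochromatic {ι W : Type*} [Fintype ι] [DecidableEq ι] [Fintype W] [DecidableEq W]
    (a b : W → ι) (ha : ∀ i, (univ.filter fun w => a w = i).card ≤ 4)
    (hb : ∀ i, (univ.filter fun w => b w = i).card ≤ 4) (q : ℕ) [NeZero q] (c : Fin q) :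
    ((univ.filter fun g : ι → Fin q => ((univ.filter fun w => g (a w) = c ∧ g (b w) = c).card : ℝ)
      ≤ 1 / (64 * (q : ℝ) ^ 2) * Fintype.card W).card : ℝ) ≤
      Real.exp (-(1 / (512 * (q : ℝ) ^ 4)) * Fintype.card W) * (q : ℝ) ^ Fintype.card ι := by
  classical
  have hq : (1 : ℝ) ≤ q := by exact_mod_cast Nat.pos_of_ne_zero (NeZero.ne q)
  have hq2 : (1 : ℝ) ≤ q ^ 2 := one_le_pow₀ hq
  let r : W → W → Prop := fun w w' => a w = a w' ∨ a w = b w' ∨ b w = a w' ∨ b w = b w'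
  have hr : ∀ S : Finset W, ∀ w ∈ S, (S.filter fun w' => r w w').card ≤ 16 := by
    intro S w _
    have hsub : (S.filter fun w' => r w w') ⊆ ((univ.filter fun w' => a w' = a w) ∪
        (univ.filter fun w' => b w' = a w)) ∪ ((univ.filter fun w' => a w' = b w) ∪
        (univ.filter fun w' => b w' = b w)) := by
      intro w' hw'
      simp only [r, mem_filter, mem_union, mem_univ, true_and] at hw' ⊢
      tauto
    refine (card_le_card hsub).trans ((card_union_le _ _).trans ?_)
    have h1 := card_union_le (univ.filter fun w' => a w' = a w) (univ.filter fun w' => b w' = a w)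
    have h2 := card_union_le (univ.filter fun w' => a w' = b w) (univ.filter fun w' => b w' = b w)
    have := ha (a w); have := ha (b w); have := hb (a w); have := hb (b w)
    omega
  have key : ∀ (T : Finset W) (U : Type) [Fintype U] (A : W → U → ι),
      Fintype.card U ≤ 2 → Function.Injective (fun p : {w // w ∈ T} × U => A p.1.1 p.2) →
      (∀ w ∈ T, ∀ g : ι → Fin q, (∀ t, g (A w t) = c) → g (a w) = c ∧ g (b w) = c) →
      Fintype.card W ≤ 32 * T.card →
      ((univ.filter fun g : ι → Fin q => ((univ.filter fun w => g (a w) = c ∧ g (b w) = c).card : ℝ)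
      ≤ 1 / (64 * (q : ℝ) ^ 2) * Fintype.card W).card : ℝ) ≤
      Real.exp (-(1 / (512 * (q : ℝ) ^ 4)) * Fintype.card W) * (q : ℝ) ^ Fintype.card ι := by
    intro T U _ A hU hA hAg hT
    have hδ1 : 1 / (2 * (q : ℝ) ^ 2) ≤ 1 := by
      rw [div_le_one (by positivity)]; linarith
    have h1 := card_lower_tail (fun p : {w // w ∈ T} × U => A p.1.1 p.2) hA c
      (δ := 1 / (2 * (q : ℝ) ^ 2)) (by positivity) hδ1
    rw [Fintype.card_fin, Fintype.card_coe] at h1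
    have hT' : (Fintype.card W : ℝ) ≤ 32 * T.card := by exact_mod_cast hT
    refine le_trans ?_ (h1.trans ?_)
    · refine Nat.cast_le.2 (card_le_card ?_)
      intro g hg
      simp only [mem_filter, mem_univ, true_and] at hg ⊢
      have h2 : (univ.filter fun w : {w // w ∈ T} => ∀ t, g (A w.1 t) = c).card ≤
          (univ.filter fun w => g (a w) = c ∧ g (b w) = c).card := by
        refine card_le_card_of_injOn Subtype.val ?_ Subtype.val_injective.injOn
        intro w hw
        simp only [coe_filter, mem_univ, true_and, Set.mem_ofPred_eq] at hw ⊢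
        exact hAg _ w.2 g hw
      have h2' : ((univ.filter fun w : {w // w ∈ T} => ∀ t, g (A w.1 t) = c).card : ℝ) ≤
          (univ.filter fun w => g (a w) = c ∧ g (b w) = c).card := by exact_mod_cast h2
      refine h2'.trans (hg.trans ?_)
      have h3 : 1 / (q : ℝ) ^ 2 ≤ 1 / (q : ℝ) ^ Fintype.card U :=
        one_div_le_one_div_of_le (by positivity) (pow_le_pow_right₀ hq hU)
      calc 1 / (64 * (q : ℝ) ^ 2) * Fintype.card W ≤ 1 / (64 * (q : ℝ) ^ 2) * (32 * T.card) := by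
            gcongr
        _ = (1 / (q : ℝ) ^ 2 - 1 / (2 * (q : ℝ) ^ 2)) * T.card := by field_simp; ring
        _ ≤ _ := by gcongr
    · gcongr ?_ * _
      apply Real.exp_le_exp.2
      have : (1 / (2 * (q : ℝ) ^ 2)) ^ 2 / 4 = 32 * (1 / (512 * (q : ℝ) ^ 4)) := by
        field_simp; norm_num
      rw [this]
      have h4 : 0 ≤ 1 / (512 * (q : ℝ) ^ 4) := by positivity
      nlinarith
  have hsplit := card_filter_add_card_filter_not (s := (univ : Finset W)) (fun w => a w = b w)
  rw [card_univ] at hsplit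
  rcases le_total (univ.filter fun w => ¬ a w = b w).card (univ.filter fun w => a w = b w).card
    with hle | hle
  · obtain ⟨T, hT, hind, hcard⟩ := exists_independent (univ.filter fun w => a w = b w) r
      (fun w _ => Or.inl rfl) (fun w w' h => by simp only [r] at h ⊢; tauto) 16 (hr _)
    refine key T Unit (fun w _ => a w) (by simp) ?_ ?_ (by omega)
    · rintro ⟨w, ⟨⟩⟩ ⟨w', ⟨⟩⟩ h
      exact Prod.ext (Subtype.ext (hind _ w.2 _ w'.2 (Or.inl h))) rfl
    · intro w hw g hg
      have h1 := (mem_filter.1 (hT hw)).2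
      exact ⟨hg (), h1 ▸ hg ()⟩
  · obtain ⟨T, hT, hind, hcard⟩ := exists_independent (univ.filter fun w => ¬ a w = b w) r
      (fun w _ => Or.inl rfl) (fun w w' h => by simp only [r] at h ⊢; tauto) 16 (hr _)
    refine key T Bool (fun w t => if t then a w else b w) (by simp) ?_ ?_ (by omega)
    · rintro ⟨w, t⟩ ⟨w', t'⟩ h
      have h1 : w = w' := by
        refine Subtype.ext (hind _ w.2 _ w'.2 ?_)
        cases t <;> cases t'
        · exact Or.inr (Or.inr (Or.inr h))
        · exact Or.inr (Or.inr (Or.inl h))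
        · exact Or.inr (Or.inl h)
        · exact Or.inl h
      subst h1
      have h2 : ¬ a w.1 = b w.1 := (mem_filter.1 (hT w.2)).2
      cases t <;> cases t'
      · rfl
      · exact absurd h.symm h2
      · exact absurd h h2
      · rfl
    · intro w hw g hg
      exact ⟨by simpa using hg true, by simpa using hg false⟩

/-- The graph formed by the edge sets `F i` with `i ∈ J`. -/
def Rel {ι V : Type*} (F : ι → Finset (Sym2 V)) (J : Finset ι) (x w : V) : Prop :=
  ∃ i ∈ J, s(x, w) ∈ F i

instance {ι V : Type*} [DecidableEq V] (F : ι → Finset (Sym2 V)) (J : Finset ι) (x w : V) :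
    Decidable (Rel F J x w) :=
  inferInstanceAs (Decidable (∃ i ∈ J, s(x, w) ∈ F i))

/-- Random colouring of edge-disjoint graphs of maximum degree two: common neighbourhoods along
prescribed sequences of vertices are inherited by all colour classes. -/
lemma exists_colouring_inherit {ι V P : Type*} [Fintype ι] [DecidableEq ι] [Fintype V]
    [DecidableEq V] [Fintype P] {n : ℕ} (F : ι → Finset (Sym2 V))
    (hdeg : ∀ i x, (univ.filter fun w => s(x, w) ∈ F i).card ≤ 2)
    (x y : P → V) (u v : P → Fin n → V)
    (hu : ∀ p w, (univ.filter fun j => u p j = w).card ≤ 2)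
    (hv : ∀ p w, (univ.filter fun j => v p j = w).card ≤ 2) (q : ℕ) [NeZero q] {N : ℝ}
    (hN : (Fintype.card P : ℝ) * q * Real.exp (-(1 / (512 * (q : ℝ) ^ 4)) * N) < 1) :
    ∃ g : ι → Fin q, ∀ p c,
      N ≤ (univ.filter fun j => Rel F univ (x p) (u p j) ∧ Rel F univ (y p) (v p j)).card →
      1 / (64 * (q : ℝ) ^ 2) * N ≤
        (univ.filter fun j => Rel F (univ.filter fun i => g i = c) (x p) (u p j) ∧
          Rel F (univ.filter fun i => g i = c) (y p) (v p j)).card := by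
  classical
  by_contra hcon
  push Not at hcon
  let W : P → Finset (Fin n) := fun p =>
    univ.filter fun j => Rel F univ (x p) (u p j) ∧ Rel F univ (y p) (v p j)
  let X : (ι → Fin q) → P → Fin q → Finset (Fin n) := fun g p c =>
    univ.filter fun j => Rel F (univ.filter fun i => g i = c) (x p) (u p j) ∧
          Rel F (univ.filter fun i => g i = c) (y p) (v p j)
  let B : P → Fin q → Finset (ι → Fin q) := fun p c =>
    univ.filter fun g => N ≤ (W p).card ∧ ((X g p c).card : ℝ) < 1 / (64 * (q : ℝ) ^ 2) * N
  have hfib : ∀ (x : V) (u : Fin n → V) (S : Finset (Fin n))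
      (_ : ∀ w, (univ.filter fun j => u j = w).card ≤ 2) (a : {j // j ∈ S} → ι)
      (_ : ∀ j, s(x, u j.1) ∈ F (a j)) (i : ι), (univ.filter fun j => a j = i).card ≤ 4 := by
    intro x u S hu a ha i
    calc (univ.filter fun j => a j = i).card
        ≤ (univ.filter fun j : Fin n => s(x, u j) ∈ F i).card := by
          refine card_le_card_of_injOn Subtype.val ?_ Subtype.val_injective.injOn
          intro j hj
          simp only [coe_filter, mem_univ, true_and, Set.mem_ofPred_eq] at hj ⊢
          exact hj ▸ ha j
      _ ≤ 2 * (univ.filter fun w => s(x, w) ∈ F i).card := by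
          refine card_le_mul_card_image_of_maps_to (f := u) ?_ 2 ?_
          · intro j hj
            simpa using hj
          · intro w _
            exact (card_le_card (filter_subset_filter _ (subset_univ _))).trans (hu w)
      _ ≤ 4 := by have := hdeg i x; omega
  have hB : ∀ p c, ((B p c).card : ℝ) ≤
      Real.exp (-(1 / (512 * (q : ℝ) ^ 4)) * N) * (q : ℝ) ^ Fintype.card ι := by
    intro p c
    by_cases hNp : N ≤ (W p).card
    · have h1 : ∀ j : {j // j ∈ W p}, ∃ i, s(x p, u p j.1) ∈ F i := fun j => by
        obtain ⟨i, -, hi⟩ := (mem_filter.1 j.2).2.1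
        exact ⟨i, hi⟩
      have h2 : ∀ j : {j // j ∈ W p}, ∃ i, s(y p, v p j.1) ∈ F i := fun j => by
        obtain ⟨i, -, hi⟩ := (mem_filter.1 j.2).2.2
        exact ⟨i, hi⟩
      choose a ha using h1
      choose b hb using h2
      have h3 := card_few_monochromatic a b (hfib _ _ _ (hu p) a ha) (hfib _ _ _ (hv p) b hb) q c
      rw [Fintype.card_coe] at h3
      refine le_trans ?_ (h3.trans ?_)
      · refine Nat.cast_le.2 (card_le_card ?_)
        intro g hg
        obtain ⟨-, hg⟩ := (mem_filter.1 hg).2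
        simp only [mem_filter, mem_univ, true_and]
        have h4 : (univ.filter fun w => g (a w) = c ∧ g (b w) = c).card ≤ (X g p c).card := by
          refine card_le_card_of_injOn Subtype.val ?_ Subtype.val_injective.injOn
          intro j hj
          simp only [X, coe_filter, mem_univ, true_and, Set.mem_ofPred_eq] at hj ⊢
          exact ⟨⟨a j, by simpa using hj.1, ha j⟩, ⟨b j, by simpa using hj.2, hb j⟩⟩
        refine (Nat.cast_le.2 h4).trans (hg.le.trans ?_)
        gcongr
      · gcongr ?_ * _
        apply Real.exp_le_exp.2
        have h4 : 0 ≤ 1 / (512 * (q : ℝ) ^ 4) := by positivity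
        nlinarith
    · have : B p c = ∅ := filter_false_of_mem fun g _ h => hNp h.1
      rw [this]
      simp only [card_empty, Nat.cast_zero]
      positivity
  have hcov : (univ : Finset (ι → Fin q)) ⊆ univ.biUnion fun p => univ.biUnion fun c => B p c := by
    intro g _
    obtain ⟨p, c, h⟩ := hcon g
    simp only [mem_biUnion, mem_univ, true_and]
    exact ⟨p, c, mem_filter.2 ⟨mem_univ _, h⟩⟩
  have hcard := card_le_card hcov
  rw [card_univ, Fintype.card_fun, Fintype.card_fin] at hcard
  have h1 : ((q : ℝ) ^ Fintype.card ι) ≤ Fintype.card P * (q *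
      (Real.exp (-(1 / (512 * (q : ℝ) ^ 4)) * N) * (q : ℝ) ^ Fintype.card ι)) := by
    calc ((q : ℝ) ^ Fintype.card ι) = ((q ^ Fintype.card ι : ℕ) : ℝ) := by push_cast; rfl
      _ ≤ ∑ p : P, ∑ c : Fin q, ((B p c).card : ℝ) := by
          exact_mod_cast hcard.trans (card_biUnion_le.trans
            (sum_le_sum fun p _ => card_biUnion_le))
      _ ≤ ∑ p : P, ∑ c : Fin q, _ := sum_le_sum fun p _ => sum_le_sum fun c _ => hB p c
      _ = _ := by simp
  have hK : 0 < (q : ℝ) ^ Fintype.card ι := by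
    have : 0 < (q : ℝ) := by exact_mod_cast Nat.pos_of_ne_zero (NeZero.ne q)
    positivity
  nlinarith

/-- Bound on the number of small subsets of an `n`-element set. -/
lemma card_finset_card_le (n : ℕ) {z M : ℝ} (hz : 0 < z) (hz1 : z ≤ 1) :
    (Fintype.card {S : Finset (Fin n) // (S.card : ℝ) ≤ M} : ℝ) ≤
      Real.exp (M * -Real.log z + z * n) := by
  have h1 : ∑ S : Finset (Fin n), z ^ S.card * 1 ^ (n - S.card) = (z + 1) ^ n := by
    simpa using Fintype.sum_pow_mul_eq_add_pow (Fin n) z 1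
  have h2 : ∀ S : {S : Finset (Fin n) // (S.card : ℝ) ≤ M},
      Real.exp (M * Real.log z) ≤ z ^ S.1.card := by
    intro S
    rw [← Real.exp_log (pow_pos hz _), Real.log_pow]
    apply Real.exp_le_exp.2
    exact mul_le_mul_of_nonpos_right S.2 (Real.log_nonpos hz.le hz1)
  have h3 : Fintype.card {S : Finset (Fin n) // (S.card : ℝ) ≤ M} * Real.exp (M * Real.log z) ≤
      (z + 1) ^ n := by
    calc _ = ∑ S : {S : Finset (Fin n) // (S.card : ℝ) ≤ M}, Real.exp (M * Real.log z) := by simp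
      _ ≤ ∑ S : {S : Finset (Fin n) // (S.card : ℝ) ≤ M}, z ^ S.1.card :=
          sum_le_sum fun S _ => h2 S
      _ = ∑ S ∈ univ.filter (fun S : Finset (Fin n) => (S.card : ℝ) ≤ M), z ^ S.card := by
          rw [sum_subtype (p := fun S : Finset (Fin n) => (S.card : ℝ) ≤ M)]
          simp
      _ ≤ ∑ S : Finset (Fin n), z ^ S.card :=
          sum_le_sum_of_subset_of_nonneg (filter_subset _ _) fun S _ _ => by positivity
      _ = (z + 1) ^ n := by simpa using h1
  have h4 : (z + 1) ^ n ≤ Real.exp (z * n) := by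
    rw [mul_comm, Real.exp_nat_mul]
    gcongr
    exact Real.add_one_le_exp z
  calc _ = Fintype.card {S : Finset (Fin n) // (S.card : ℝ) ≤ M} * Real.exp (M * Real.log z) *
        Real.exp (M * -Real.log z) := by
        rw [mul_assoc, ← Real.exp_add]; simp
    _ ≤ Real.exp (z * n) * Real.exp (M * -Real.log z) := by gcongr; exact h3.trans h4
    _ = _ := by rw [← Real.exp_add, add_comm]

/-- Bound on the number of cyclic binary words with few changes. -/
lemma card_few_changes (n : ℕ) [NeZero n] {z M : ℝ} (hz : 0 < z) (hz1 : z ≤ 1) :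
    (Fintype.card {τ : Fin n → Bool // ((univ.filter fun j => τ j ≠ τ (j - 1)).card : ℝ) ≤ M} : ℝ)
      ≤ 2 * Real.exp (M * -Real.log z + z * n) := by
  have hinj : Function.Injective (fun τ : {τ : Fin n → Bool //
      ((univ.filter fun j => τ j ≠ τ (j - 1)).card : ℝ) ≤ M} =>
      ((τ.1 0, ⟨univ.filter fun j => τ.1 j ≠ τ.1 (j - 1), τ.2⟩) :
        Bool × {S : Finset (Fin n) // (S.card : ℝ) ≤ M})) := by
    intro τ σ h
    rw [Prod.ext_iff, Subtype.ext_iff] at h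
    obtain ⟨h0, hS⟩ := h
    have hS' : ∀ j, τ.1 j ≠ τ.1 (j - 1) ↔ σ.1 j ≠ σ.1 (j - 1) := fun j => by
      simpa using Finset.ext_iff.1 hS j
    have : ∀ (k : ℕ) (hk : k < n), τ.1 ⟨k, hk⟩ = σ.1 ⟨k, hk⟩ := by
      intro k
      induction k with
      | zero => intro hk; exact h0
      | succ k ih =>
        intro hk
        have h1 := hS' ⟨k + 1, hk⟩
        have h2 : (⟨k + 1, hk⟩ : Fin n) - 1 = ⟨k, by omega⟩ := by
          rw [sub_eq_iff_eq_add]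
          apply Fin.ext
          rw [Fin.val_add, Fin.val_one', Nat.add_mod_mod, Nat.mod_eq_of_lt hk]
        rw [h2, ih (by omega)] at h1
        revert h1
        cases τ.1 ⟨k + 1, hk⟩ <;> cases σ.1 ⟨k + 1, hk⟩ <;> cases σ.1 ⟨k, by omega⟩ <;> simp
    apply Subtype.ext
    funext j
    exact this j.1 j.2
  have h1 := Fintype.card_le_of_injective _ hinj
  rw [Fintype.card_prod, Fintype.card_bool] at h1
  calc _ ≤ ((2 * Fintype.card {S : Finset (Fin n) // (S.card : ℝ) ≤ M} : ℕ) : ℝ) := by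
        exact_mod_cast h1
    _ ≤ _ := by
        push_cast
        gcongr
        exact card_finset_card_le n hz hz1

/-- The pair of consecutive positions `j`, `j + 1`, swapped unless `τ j`. -/
def orient {n : ℕ} [NeZero n] (τ : Fin n → Bool) (j : Fin n) : Fin n := if τ j then j else j + 1

lemma card_orient_le {V : Type*} [DecidableEq V] {n : ℕ} [NeZero n] (e : Fin n ≃ V)
    (τ : Fin n → Bool) (w : V) : (univ.filter fun j => e (orient τ j) = w).card ≤ 2 := by
  refine (card_le_card (t := {e.symm w, e.symm w - 1}) ?_).trans card_le_two
  intro j hj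
  simp only [mem_filter, mem_univ, true_and, ← Equiv.eq_symm_apply, orient] at hj
  simp only [mem_insert, mem_singleton]
  split_ifs at hj
  · exact Or.inl hj
  · exact Or.inr (eq_sub_of_add_eq hj)

/-- A small subfamily of edge-disjoint graphs of maximum degree two which inherits all large common
neighbourhoods along the given cyclic orders, up to few changes of orientation. -/
lemma exists_reservoir {β : ℝ} (hβ : 0 < β) (hβ1 : β ≤ 1) (q : ℕ) [NeZero q] :
    ∃ (μ : ℝ) (n₀ : ℕ), 0 < μ ∧ ∀ (V ι : Type) [Fintype V] [DecidableEq V] [Fintype ι]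
      [DecidableEq ι] (n : ℕ) [NeZero n] (F : ι → Finset (Sym2 V)) (e : ι → Fin n ≃ V),
      n₀ ≤ n → Fintype.card ι ≤ n →
      (∀ i x, (univ.filter fun w => s(x, w) ∈ F i).card ≤ 2) →
      ∃ J : Finset ι, J.card * q ≤ Fintype.card ι ∧
        ∀ i x y (τ : Fin n → Bool), ((univ.filter fun j => τ j ≠ τ (j - 1)).card : ℝ) ≤ μ * n →
          β * n ≤ (univ.filter fun j => Rel F univ x (e i (orient τ j)) ∧
            Rel F univ y (e i (orient (fun j => !τ j) j))).card →
          1 / (64 * (q : ℝ) ^ 2) * (β * n) ≤ (univ.filter fun j => Rel F J x (e i (orient τ j)) ∧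
            Rel F J y (e i (orient (fun j => !τ j) j))).card := by
  have hq : (1 : ℝ) ≤ q := by exact_mod_cast Nat.pos_of_ne_zero (NeZero.ne q)
  have hq2 : (1 : ℝ) ≤ q ^ 4 := one_le_pow₀ hq
  obtain ⟨c, hc⟩ : ∃ c : ℝ, c = 1 / (512 * (q : ℝ) ^ 4) * β := ⟨_, rfl⟩
  have hc0 : 0 < c := by rw [hc]; positivity
  have hc1 : c ≤ 1 := by
    have : 1 / (512 * (q : ℝ) ^ 4) ≤ 1 := by rw [div_le_one (by positivity)]; linarith
    rw [hc]; exact mul_le_one₀ this hβ.le hβ1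
  obtain ⟨L, hL⟩ : ∃ L : ℝ, L = -Real.log (c / 4) := ⟨_, rfl⟩
  have hL0 : 0 ≤ L := by
    rw [hL, neg_nonneg]; exact Real.log_nonpos (by positivity) (by linarith)
  obtain ⟨n₀, hn₀⟩ := eventually_atTop.1
    (eventually_pow_mul_exp_lt_one (2 * q) 3 (show 0 < c / 2 by positivity))
  refine ⟨c / (4 * (L + 1)), n₀, by positivity, fun V ι _ _ _ _ n _ F e hn hι hdeg => ?_⟩
  have hμL : c / (4 * (L + 1)) * L ≤ c / 4 := by
    rw [div_mul_eq_mul_div, div_le_div_iff₀ (by positivity) (by norm_num)]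
    nlinarith
  let P := ι × V × V × {τ : Fin n → Bool //
    ((univ.filter fun j => τ j ≠ τ (j - 1)).card : ℝ) ≤ c / (4 * (L + 1)) * n}
  have hP : (Fintype.card P : ℝ) ≤ n ^ 3 * (2 * Real.exp (c / 2 * n)) := by
    have hV : Fintype.card V = n ∨ IsEmpty ι := by
      rcases isEmpty_or_nonempty ι with h | ⟨⟨i⟩⟩
      · exact Or.inr h
      · left; rw [← Fintype.card_congr (e i), Fintype.card_fin]
    rcases hV with hV | hV
    · have h1 := card_few_changes n (z := c / 4) (M := c / (4 * (L + 1)) * n) (by positivity)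
        (by linarith)
      rw [← hL] at h1
      have h2 : c / (4 * (L + 1)) * n * L + c / 4 * n ≤ c / 2 * n := by
        have := mul_le_mul_of_nonneg_right hμL (Nat.cast_nonneg (α := ℝ) n)
        linarith
      have hι' : (Fintype.card ι : ℝ) ≤ n := by exact_mod_cast hι
      simp only [P, Fintype.card_prod, hV, Nat.cast_mul]
      calc _ ≤ (n : ℝ) * (n * (n * (2 * Real.exp (c / 2 * n)))) := by
            gcongr
            exact h1.trans (by gcongr)
        _ = _ := by ring
    · have : Fintype.card P = 0 := Fintype.card_eq_zero_iff.2 ⟨fun p => hV.false p.1⟩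
      rw [this, Nat.cast_zero]
      positivity
  have hN : (Fintype.card P : ℝ) * q * Real.exp (-(1 / (512 * (q : ℝ) ^ 4)) * (β * n)) < 1 := by
    refine lt_of_le_of_lt ?_ (hn₀ n hn)
    calc _ ≤ n ^ 3 * (2 * Real.exp (c / 2 * n)) * q *
          Real.exp (-(1 / (512 * (q : ℝ) ^ 4)) * (β * n)) := by gcongr
      _ = 2 * q * n ^ 3 * (Real.exp (c / 2 * n) * Real.exp (-c * n)) := by
          rw [show -(1 / (512 * (q : ℝ) ^ 4)) * (β * n) = -c * n by rw [hc]; ring]; ring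
      _ = _ := by rw [← Real.exp_add]; congr 2; ring
  obtain ⟨g, hg⟩ := exists_colouring_inherit F hdeg (fun p : P => p.2.1) (fun p => p.2.2.1)
    (fun p j => e p.1 (orient p.2.2.2.1 j)) (fun p j => e p.1 (orient (fun j => !p.2.2.2.1 j) j))
    (fun p w => card_orient_le _ _ _) (fun p w => card_orient_le _ (fun j => !p.2.2.2.1 j) _) q hN
  obtain ⟨c, hc⟩ : ∃ c, (univ.filter fun i => g i = c).card * q ≤ Fintype.card ι := by
    by_contra hcon
    push Not at hcon
    have h1 := card_eq_sum_card_fiberwise (s := (univ : Finset ι)) (f := g) (t := univ) (by simp)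
    have h2 : ∑ c : Fin q, Fintype.card ι < ∑ c : Fin q, (univ.filter fun i => g i = c).card * q :=
      sum_lt_sum_of_nonempty ⟨0, mem_univ _⟩ fun c _ => hcon c
    rw [← sum_mul, ← h1, card_univ] at h2
    simp [mul_comm] at h2
  exact ⟨_, hc, fun i x y τ hτ h => hg (i, x, y, ⟨τ, hτ⟩) c h⟩

lemma card_cycEdges_sdiff_comm {V : Type*} [DecidableEq V] {n : ℕ} [NeZero n] (hn : 3 ≤ n)
    (e e' : Fin n ≃ V) :
    (cycEdges e \ cycEdges e').card = (cycEdges e' \ cycEdges e).card := by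
  have h1 := card_sdiff_add_card_inter (cycEdges e) (cycEdges e')
  have h2 := card_sdiff_add_card_inter (cycEdges e') (cycEdges e)
  rw [inter_comm, card_cycEdges _ hn] at h2
  rw [card_cycEdges _ hn] at h1
  omega

/-- If common neighbourhoods along `e` are inherited from `R` to `R'` for all orientations with few
changes, then they are inherited also along any cyclic order sharing most of its edges with `e`. -/
lemma card_common_of_close {V : Type*} [Fintype V] [DecidableEq V] {n : ℕ} [NeZero n] (hn : 3 ≤ n)
    (e e' : Fin n ≃ V) (R R' : V → V → Prop) [DecidableRel R] [DecidableRel R'] (x y : V) (k : ℕ)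
    (he : (cycEdges e' \ cycEdges e).card ≤ k) {M B θ : ℝ}
    (hres : ∀ τ : Fin n → Bool, ((univ.filter fun j => τ j ≠ τ (j - 1)).card : ℝ) ≤ M →
      B ≤ (univ.filter fun j => R x (e (orient τ j)) ∧
        R y (e (orient (fun j => !τ j) j))).card →
      θ ≤ (univ.filter fun j => R' x (e (orient τ j)) ∧
        R' y (e (orient (fun j => !τ j) j))).card)
    (hM : 2 * (k : ℝ) ≤ M)
    (hB : B + k ≤ (univ.filter fun w => R x w ∧ R y (succPerm e' w)).card) :
    θ - k ≤ (univ.filter fun w => R' x w ∧ R' y (succPerm e' w)).card := by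
  let τ : Fin n → Bool := fun j => decide (succPerm e' (e j) = e (j + 1))
  let Z : Finset (Fin n) := univ.filter fun j => s(e j, e (j + 1)) ∉ cycEdges e'
  have hinj : Function.Injective fun j : Fin n => s(e j, e (j + 1)) := by
    intro a b h
    apply e.injective
    apply mk_succPerm_injective e hn
    simpa using h
  have hZ : Z.card ≤ k := by
    refine le_trans (le_of_eq_of_le ?_ (card_cycEdges_sdiff_comm hn e e').le) he
    rw [← card_image_of_injective _ hinj]
    congr 1
    ext z
    simp only [Z, mem_image, mem_filter, mem_univ, true_and, cycEdges]
    aesop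
  have hτ1 : ∀ j, τ j = true → e (orient τ j) = e j ∧ e (orient (fun j => !τ j) j) = e (j + 1) := by
    intro j h; simp [orient, h]
  have hτ2 : ∀ j, τ j = false → e (orient τ j) = e (j + 1) ∧ e (orient (fun j => !τ j) j) = e j := by
    intro j h; simp [orient, h]
  have hnext : ∀ j, j ∉ Z → succPerm e' (e (orient τ j)) = e (orient (fun j => !τ j) j) := by
    intro j hj
    simp only [Z, mem_filter, mem_univ, true_and, not_not, mem_cycEdges_iff_or] at hj
    by_cases h : succPerm e' (e j) = e (j + 1)
    · obtain ⟨h1, h2⟩ := hτ1 j (decide_eq_true h)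
      rw [h1, h2, h]
    · obtain ⟨h1, h2⟩ := hτ2 j (decide_eq_false h)
      rw [h1, h2]
      exact hj.resolve_left h
  have hedge : ∀ j, s(e (orient τ j), e (orient (fun j => !τ j) j)) = s(e j, e (j + 1)) := by
    intro j
    rcases h : τ j with _ | _
    · rw [(hτ2 j h).1, (hτ2 j h).2, Sym2.eq_swap]
    · rw [(hτ1 j h).1, (hτ1 j h).2]
  have hchange : (univ.filter fun j => τ j ≠ τ (j - 1)).card ≤ 2 * k := by
    have hsub : (univ.filter fun j => τ j ≠ τ (j - 1)) ⊆ Z ∪ Z.image fun j => j + 1 := by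
      intro j hj
      simp only [mem_filter, mem_univ, true_and] at hj
      by_contra hcon
      simp only [mem_union, mem_image, not_or, not_exists, not_and] at hcon
      have h1 := hnext j hcon.1
      have h2 := hnext (j - 1) fun h => hcon.2 _ h (sub_add_cancel j 1)
      rcases h3 : τ j with _ | _ <;> rcases h4 : τ (j - 1) with _ | _
      · exact hj (h3.trans h4.symm)
      · rw [(hτ2 _ h3).1, (hτ2 _ h3).2] at h1
        rw [(hτ1 _ h4).1, (hτ1 _ h4).2, sub_add_cancel, ← h1, EmbeddingLike.apply_eq_iff_eq] at h2
        apply succPerm_succPerm_ne e hn (e (j - 1))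
        rw [succPerm_apply, succPerm_apply, sub_add_cancel, h2]
      · rw [(hτ1 _ h3).1, (hτ1 _ h3).2] at h1
        rw [(hτ2 _ h4).1, (hτ2 _ h4).2, sub_add_cancel, h1] at h2
        apply succPerm_succPerm_ne e hn (e (j - 1))
        rw [succPerm_apply, succPerm_apply, sub_add_cancel, h2]
      · exact hj (h3.trans h4.symm)
    have h1 := (card_le_card hsub).trans (card_union_le _ _)
    have h2 : (Z.image fun j => j + 1).card ≤ Z.card := card_image_le
    omega
  have hup : (univ.filter fun w => R x w ∧ R y (succPerm e' w)).card ≤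
      (univ.filter fun j => R x (e (orient τ j)) ∧ R y (e (orient (fun j => !τ j) j))).card + k := by
    have hsub : (univ.filter fun w => R x w ∧ R y (succPerm e' w)) ⊆
        ((univ.filter fun j => R x (e (orient τ j)) ∧
          R y (e (orient (fun j => !τ j) j))).image fun j => e (orient τ j)) ∪
        univ.filter fun w => s(w, succPerm e' w) ∉ cycEdges e := by
      intro w hw
      simp only [mem_union, mem_image, mem_filter, mem_univ, true_and] at hw ⊢
      by_cases h : s(w, succPerm e' w) ∈ cycEdges e
      · left
        simp only [cycEdges, mem_image, mem_univ, true_and] at h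
        obtain ⟨j, hj⟩ := h
        have hjZ : j ∉ Z := by
          simp only [Z, mem_filter, mem_univ, true_and, not_not, hj]
          exact mk_succPerm_mem e' w
        have h1 := hnext j hjZ
        have h2 : e (orient τ j) = w := by
          apply mk_succPerm_injective e' hn
          simp only [h1, hedge, hj]
        refine ⟨j, ⟨?_, ?_⟩, h2⟩
        · rw [h2]; exact hw.1
        · rw [← h1, h2]; exact hw.2
      · exact Or.inr h
    refine (card_le_card hsub).trans ((card_union_le _ _).trans
      (add_le_add card_image_le (le_trans ?_ he)))
    rw [← card_image_of_injective _ (mk_succPerm_injective e' hn)]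
    apply card_le_card
    intro z hz
    obtain ⟨w, hw, rfl⟩ := mem_image.1 hz
    exact Finset.mem_sdiff.2 ⟨mk_succPerm_mem e' w, (mem_filter.1 hw).2⟩
  have hdown : (univ.filter fun j => R' x (e (orient τ j)) ∧
      R' y (e (orient (fun j => !τ j) j))).card ≤
      (univ.filter fun w => R' x w ∧ R' y (succPerm e' w)).card + k := by
    have h1 : ((univ.filter fun j => R' x (e (orient τ j)) ∧
        R' y (e (orient (fun j => !τ j) j))) \ Z).card ≤
        (univ.filter fun w => R' x w ∧ R' y (succPerm e' w)).card := by
      refine card_le_card_of_injOn (fun j => e (orient τ j)) ?_ ?_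
      · intro j hj
        simp only [coe_sdiff, coe_filter, mem_univ, true_and, Set.mem_sdiff, Set.mem_ofPred_eq,
          mem_coe] at hj ⊢
        rw [hnext j hj.2]
        exact hj.1
      · intro j hj j' hj' h
        simp only [coe_sdiff, Set.mem_sdiff, mem_coe] at hj hj'
        apply hinj
        simp only at h ⊢
        rw [← hedge, ← hedge, ← hnext j hj.2, ← hnext j' hj'.2, h]
    have h2 := card_le_card_sdiff_add_card (s := univ.filter fun j => R' x (e (orient τ j)) ∧
      R' y (e (orient (fun j => !τ j) j))) (t := Z)
    omega
  have h1 : ((univ.filter fun w => R x w ∧ R y (succPerm e' w)).card : ℝ) ≤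
      (univ.filter fun j => R x (e (orient τ j)) ∧ R y (e (orient (fun j => !τ j) j))).card + k := by
    exact_mod_cast hup
  have h2 : ((univ.filter fun j => R' x (e (orient τ j)) ∧
      R' y (e (orient (fun j => !τ j) j))).card : ℝ) ≤
      (univ.filter fun w => R' x w ∧ R' y (succPerm e' w)).card + k := by
    exact_mod_cast hdown
  have h3 : ((univ.filter fun j => τ j ≠ τ (j - 1)).card : ℝ) ≤ 2 * k := by exact_mod_cast hchange
  have h4 := hres τ (h3.trans hM) (by linarith)
  linarith

/-- If each vertex is an inner vertex of most of the linear forests `F i`, then it has large degree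
in their union. -/
lemma le_card_rel_univ {V ι : Type*} [Fintype V] [DecidableEq V] [Fintype ι] {n : ℕ}
    [NeZero n] (hn : 3 ≤ n) (F : ι → Finset (Sym2 V)) (e : ι → Fin n ≃ V)
    (hF : ∀ i j, i ≠ j → Disjoint (F i) (F j)) (x : V) :
    2 * Fintype.card ι ≤ (univ.filter fun w => Rel F univ x w).card +
      2 * (univ.filter fun i => ¬ (s(x, succPerm (e i) x) ∈ F i ∧
          s((succPerm (e i)).symm x, x) ∈ F i)).card := by
  have h1 := card_filter_add_card_filter_not (s := (univ : Finset ι))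
    (fun i => s(x, succPerm (e i) x) ∈ F i ∧ s((succPerm (e i)).symm x, x) ∈ F i)
  rw [card_univ] at h1
  have h2 : ((univ.filter fun i => s(x, succPerm (e i) x) ∈ F i ∧
      s((succPerm (e i)).symm x, x) ∈ F i) ×ˢ (univ : Finset Bool)).card ≤
      (univ.filter fun w => Rel F univ x w).card := by
    refine card_le_card_of_injOn
      (fun p => if p.2 then succPerm (e p.1) x else (succPerm (e p.1)).symm x) ?_ ?_
    · rintro ⟨i, t⟩ hp
      simp only [coe_product, coe_filter, mem_univ, true_and, Set.mem_prod, Set.mem_ofPred_eq,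
        coe_univ, Set.mem_univ, and_true] at hp ⊢
      refine ⟨i, mem_univ _, ?_⟩
      cases t
      · rw [Sym2.eq_swap]; exact hp.2
      · exact hp.1
    · rintro ⟨i, t⟩ hp ⟨i', t'⟩ hp' h
      simp only [coe_product, coe_filter, mem_univ, true_and, Set.mem_prod, Set.mem_ofPred_eq,
        coe_univ, Set.mem_univ, and_true] at hp hp' h
      have key : ∀ i t, (s(x, succPerm (e i) x) ∈ F i ∧ s((succPerm (e i)).symm x, x) ∈ F i) →
          s(x, if t = true then succPerm (e i) x else (succPerm (e i)).symm x) ∈ F i := by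
        intro i t hi
        cases t
        · rw [Sym2.eq_swap]; exact hi.2
        · exact hi.1
      have hii : i = i' := by
        by_contra hne
        have h3 := key i t hp
        rw [h] at h3
        exact disjoint_left.1 (hF _ _ hne) h3 (key i' t' hp')
      subst hii
      have h5 : succPerm (e i) x ≠ (succPerm (e i)).symm x := by
        rw [Ne, Equiv.eq_symm_apply]
        exact succPerm_succPerm_ne _ hn x
      cases t <;> cases t' <;> simp_all
  rw [card_product, card_univ, Fintype.card_bool] at h2
  omega

lemma card_rel_succ_ge {V : Type*} [Fintype V] [DecidableEq V] (R : V → V → Prop) [DecidableRel R]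
    (σ : Equiv.Perm V) (x y : V) :
    (univ.filter fun w => R x w).card + (univ.filter fun w => R y w).card ≤
      (univ.filter fun w => R x w ∧ R y (σ w)).card + Fintype.card V := by
  have h1 : (univ.filter fun w => R y w).card = (univ.filter fun w => R y (σ w)).card := by
    refine (card_bij (fun w _ => σ w) ?_ ?_ ?_).symm
    · intro w hw; simpa using hw
    · intro a _ b _ h; exact σ.injective h
    · intro w hw
      exact ⟨σ.symm w, by simpa using hw, by simp⟩
  rw [h1, filter_and, ← card_union_add_card_inter, add_comm]
  gcongr
  exact card_le_univ _

/-- Reversing a segment of a cyclic order replaces two of its edges. -/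
lemma exists_two_opt {V : Type*} [DecidableEq V] {n : ℕ} [NeZero n] (hn : 3 ≤ n) (e : Fin n ≃ V)
    (x w : V) (hxw : w ≠ x) :
    ∃ e' : Fin n ≃ V, cycEdges e' ⊆ insert s(x, w) (insert s(succPerm e x, succPerm e w)
      (cycEdges e \ {s(x, succPerm e x)})) := by
  obtain ⟨m, rfl⟩ : ∃ m, n = m + 1 := ⟨n - 1, by omega⟩
  obtain ⟨c, hc⟩ := e.surjective (succPerm e x)
  let e₀ : Fin (m + 1) ≃ V := (Equiv.addRight c).trans e
  have he₀ : ∀ j, succPerm e (e₀ j) = e₀ (j + 1) := by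
    intro j
    simp only [e₀, Equiv.trans_apply, Equiv.coe_addRight, succPerm_apply]
    congr 1; abel
  have h0 : e₀ 0 = succPerm e x := by simp [e₀, hc]
  have hlast : e₀ (Fin.last m) = x := by
    apply (succPerm e).injective
    rw [he₀, Fin.last_add_one, h0]
  obtain ⟨a, ha⟩ := e₀.surjective w
  have ham : a.val < m := by
    rcases lt_or_eq_of_le (Nat.lt_succ_iff.1 a.2) with h | h
    · exact h
    · exact absurd (by rw [← ha, ← hlast]; congr 1; exact Fin.ext h) hxw
  let σ : Fin (m + 1) → Fin (m + 1) := fun j =>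
    if h : j.val ≤ a.val then j else ⟨m + a.val + 1 - j.val, by omega⟩
  have hσ1 : ∀ j, j.val ≤ a.val → σ j = j := fun j hj => dif_pos hj
  have hσ2 : ∀ j, a.val < j.val → (σ j).val = m + a.val + 1 - j.val := fun j hj => by
    simp only [σ]
    rw [dif_neg (not_le.2 hj)]
  have hσ : Function.Involutive σ := by
    intro j
    rcases le_or_gt j.val a.val with h | h
    · rw [hσ1 j h, hσ1 j h]
    · have h1 := hσ2 j h
      apply Fin.ext
      rw [hσ2 (σ j) (by omega)]
      omega
  have hne : ∀ j : Fin (m + 1), j ≠ Fin.last m →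
      s(e₀ j, e₀ (j + 1)) ∈ cycEdges e \ {s(x, succPerm e x)} := by
    intro j hj
    rw [← he₀, Finset.mem_sdiff, mem_singleton]
    refine ⟨mk_succPerm_mem _ _, fun h => hj ?_⟩
    have := mk_succPerm_injective e hn h
    rw [← hlast] at this
    exact e₀.injective this
  refine ⟨hσ.toPerm.trans e₀, ?_⟩
  intro z hz
  simp only [cycEdges, mem_image, mem_univ, true_and] at hz
  obtain ⟨j, rfl⟩ := hz
  simp only [Equiv.trans_apply, Function.Involutive.coe_toPerm]
  simp only [mem_insert]
  rcases eq_or_ne j (Fin.last m) with rfl | hj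
  · right; left
    have h1 : σ (Fin.last m) = a + 1 := by
      apply Fin.ext
      rw [hσ2 _ (by simpa using ham), Fin.val_add_one_of_lt (by rw [Fin.lt_def]; simpa using ham)]
      simp; omega
    rw [Fin.last_add_one, hσ1 0 (by simp), h0, h1, ← he₀, ha, Sym2.eq_swap]
  · have hjm : j.val < m := by
      have := j.2
      have : j.val ≠ m := fun h => hj (Fin.ext h)
      omega
    have hj1 : (j + 1).val = j.val + 1 := Fin.val_add_one_of_lt (by rw [Fin.lt_def]; simpa using hjm)
    rcases lt_trichotomy j.val a.val with h | h | h
    · right; right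
      rw [hσ1 j h.le, hσ1 (j + 1) (by omega)]
      exact hne j hj
    · left
      rw [hσ1 j h.le, show j = a from Fin.ext h, ha]
      have : σ (a + 1) = Fin.last m := by
        apply Fin.ext
        rw [← show j = a from Fin.ext h, hσ2 _ (by omega), Fin.val_last]
        omega
      rw [this, hlast, Sym2.eq_swap]
    · right; right
      have h1 := hσ2 j h
      have h2 := hσ2 (j + 1) (by omega)
      have h3 : σ j = σ (j + 1) + 1 := by
        apply Fin.ext
        rw [Fin.val_add_one_of_lt (by rw [Fin.lt_def, Fin.val_last]; omega)]
        omega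
      rw [h3, Sym2.eq_swap (a := e₀ (σ (j + 1) + 1))]
      apply hne
      intro h4
      have := congrArg Fin.val h4
      rw [Fin.val_last] at this
      omega

/-- Completing a cyclic order most of whose edges are in `A` to one using only edges of `A ∪ N`, by
repeatedly reversing segments. -/
lemma exists_completion {V : Type*} [DecidableEq V] {n : ℕ} [NeZero n] (hn : 3 ≤ n)
    (e : Fin n ≃ V) (A N : Finset (Sym2 V)) (k : ℕ) (hk : (cycEdges e \ A).card ≤ k)
    (hN : ∀ e' : Fin n ≃ V, (cycEdges e' \ cycEdges e).card ≤ 2 * k → ∀ x,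
      s(x, succPerm e' x) ∈ cycEdges e \ A →
      ∃ w, w ≠ x ∧ s(x, w) ∈ N ∧ s(succPerm e' x, succPerm e' w) ∈ N) :
    ∃ e' : Fin n ≃ V, cycEdges e' ⊆ A ∪ N ∧ (cycEdges e' \ cycEdges e).card ≤ 2 * k := by
  suffices h : ∀ (b : ℕ) (e' : Fin n ≃ V), (cycEdges e' \ (A ∪ N)).card = b →
      cycEdges e' \ (A ∪ N) ⊆ cycEdges e → (cycEdges e' \ cycEdges e).card + 2 * b ≤ 2 * k →
      ∃ e' : Fin n ≃ V, cycEdges e' ⊆ A ∪ N ∧ (cycEdges e' \ cycEdges e).card ≤ 2 * k by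
    refine h _ e rfl sdiff_subset ?_
    have : (cycEdges e \ (A ∪ N)).card ≤ (cycEdges e \ A).card :=
      card_le_card (sdiff_subset_sdiff le_rfl subset_union_left)
    rw [sdiff_self]
    simp only [bot_eq_empty, card_empty]
    omega
  intro b
  induction b using Nat.strong_induction_on with
  | _ b ih =>
    intro e' hb hsub hcard
    rcases (cycEdges e' \ (A ∪ N)).eq_empty_or_nonempty with h0 | ⟨z, hz⟩
    · exact ⟨e', sdiff_eq_empty_iff_subset.1 h0, by omega⟩
    · have hz' := Finset.mem_sdiff.1 hz
      obtain ⟨x, rfl⟩ := (mem_cycEdges e').1 hz'.1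
      rw [mem_union, not_or] at hz'
      obtain ⟨w, hwx, h1, h2⟩ := hN e' (by omega) x (Finset.mem_sdiff.2 ⟨hsub hz, hz'.2.1⟩)
      obtain ⟨e'', he''⟩ := exists_two_opt hn e' x w hwx
      have hbad : cycEdges e'' \ (A ∪ N) ⊆ (cycEdges e' \ (A ∪ N)).erase s(x, succPerm e' x) := by
        intro z hz
        obtain ⟨hz1, hz2⟩ := Finset.mem_sdiff.1 hz
        rcases mem_insert.1 (he'' hz1) with rfl | hz3
        · exact absurd (mem_union_right _ h1) hz2
        rcases mem_insert.1 hz3 with rfl | hz4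
        · exact absurd (mem_union_right _ h2) hz2
        · rw [Finset.mem_sdiff, mem_singleton] at hz4
          exact mem_erase.2 ⟨hz4.2, Finset.mem_sdiff.2 ⟨hz4.1, hz2⟩⟩
      have hlt := card_le_card hbad
      rw [card_erase_of_mem hz, hb] at hlt
      have hpos : 0 < b := hb ▸ card_pos.2 ⟨_, hz⟩
      have hnew : (cycEdges e'' \ cycEdges e).card ≤ (cycEdges e' \ cycEdges e).card + 2 := by
        have : cycEdges e'' \ cycEdges e ⊆
            insert s(x, w) (insert s(succPerm e' x, succPerm e' w) (cycEdges e' \ cycEdges e)) := by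
          intro z hz
          obtain ⟨hz1, hz2⟩ := Finset.mem_sdiff.1 hz
          have := he'' hz1
          simp only [mem_insert, Finset.mem_sdiff] at this ⊢
          tauto
        refine (card_le_card this).trans ((card_insert_le _ _).trans ?_)
        have := card_insert_le s(succPerm e' x, succPerm e' w) (cycEdges e' \ cycEdges e)
        omega
      exact ih _ (by omega) e'' rfl (hbad.trans ((erase_subset _ _).trans hsub)) (by omega)

section Degrees
variable {V : Type*} [Fintype V] [DecidableEq V]

lemma card_filter_mk_mem_cycEdges_le {n : ℕ} [NeZero n] (e : Fin n ≃ V) (v : V) :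
    (univ.filter fun w => s(v, w) ∈ cycEdges e).card ≤ 2 := by
  refine (card_le_card (t := {succPerm e v, (succPerm e).symm v}) ?_).trans card_le_two
  intro w hw
  rw [mem_filter, mem_cycEdges_iff_or] at hw
  rw [mem_insert, mem_singleton, Equiv.eq_symm_apply]
  exact hw.2.imp Eq.symm id

lemma sum_card_filter_mk_mem_le (S : Finset (Sym2 V)) :
    ∑ v, (univ.filter fun w => s(v, w) ∈ S).card ≤ 2 * S.card := by
  have h1 : ∑ v, (univ.filter fun w => s(v, w) ∈ S).card =
      (univ.filter fun p : V × V => s(p.1, p.2) ∈ S).card := by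
    simp only [card_filter, Fintype.sum_prod_type]
  rw [h1]
  refine card_le_mul_card_image_of_maps_to (f := fun p : V × V => s(p.1, p.2)) ?_ 2 ?_
  · intro p hp; simpa using hp
  · intro z _
    induction z with | _ a b =>
    refine (card_le_card (t := {(a, b), (b, a)}) ?_).trans card_le_two
    rintro ⟨c, d⟩ hp
    simp only [mem_filter, mem_univ, true_and, Sym2.eq_iff] at hp
    simpa [Prod.ext_iff] using hp.2

/-- Completing a cyclic order most of whose edges are in `A` by edges of `R` which are not in `U` and
only join vertices satisfying `ok`. -/
lemma exists_completion_avoiding {n : ℕ} [NeZero n] (hn : 3 ≤ n) (e : Fin n ≃ V)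
    (A R U : Finset (Sym2 V)) (ok : V → Prop) [DecidablePred ok] (k D H : ℕ)
    (hk : (cycEdges e \ A).card ≤ k) (hok : ∀ z ∈ cycEdges e \ A, ∀ v ∈ z, ok v)
    (hD : ∀ v, ok v → (univ.filter fun w => s(v, w) ∈ U).card ≤ D)
    (hH : (univ.filter fun v => ¬ ok v).card ≤ H) (hR : ∀ x, s(x, x) ∉ R)
    (hΘ : ∀ e' : Fin n ≃ V, (cycEdges e' \ cycEdges e).card ≤ 2 * k → ∀ x y,
      2 * D + 2 * H < (univ.filter fun w => s(x, w) ∈ R ∧ s(y, succPerm e' w) ∈ R).card) :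
    ∃ e' : Fin n ≃ V, (∀ z ∈ cycEdges e', z ∈ A ∨ z ∈ R ∧ z ∉ U ∧ ∀ v ∈ z, ok v) ∧
      (cycEdges e' \ cycEdges e).card ≤ 2 * k := by
  classical
  have hN : ∀ e' : Fin n ≃ V, (cycEdges e' \ cycEdges e).card ≤ 2 * k → ∀ x,
      s(x, succPerm e' x) ∈ cycEdges e \ A →
      ∃ w, w ≠ x ∧ s(x, w) ∈ R.filter (fun z => z ∉ U ∧ ∀ v ∈ z, ok v) ∧
        s(succPerm e' x, succPerm e' w) ∈ R.filter fun z => z ∉ U ∧ ∀ v ∈ z, ok v := by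
    intro e' he' x hx
    have hokx := hok _ hx x (Sym2.mem_mk_left _ _)
    have hoky := hok _ hx _ (Sym2.mem_mk_right _ _)
    have h1 := hΘ e' he' x (succPerm e' x)
    have hpre : ∀ p : V → Prop, ∀ [DecidablePred p],
        (univ.filter fun w => p (succPerm e' w)).card = (univ.filter fun w => p w).card := by
      intro p _
      refine card_bij (fun w _ => succPerm e' w) ?_ ?_ ?_
      · intro w hw; simpa using hw
      · intro a _ b _ h; exact (succPerm e').injective h
      · intro w hw
        exact ⟨(succPerm e').symm w, by simpa using hw, by simp⟩
    have h2 : ((univ.filter fun w => s(x, w) ∈ U) ∪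
        (univ.filter fun w => s(succPerm e' x, succPerm e' w) ∈ U) ∪
        ((univ.filter fun w => ¬ ok w) ∪ (univ.filter fun w => ¬ ok (succPerm e' w)))).card
        ≤ 2 * D + 2 * H := by
      refine (card_union_le _ _).trans ?_
      have h3 := card_union_le (univ.filter fun w => s(x, w) ∈ U)
        (univ.filter fun w => s(succPerm e' x, succPerm e' w) ∈ U)
      have h4 := card_union_le (univ.filter fun w => ¬ ok w)
        (univ.filter fun w => ¬ ok (succPerm e' w))
      have h5 := hpre fun w => ¬ ok w
      have h6 := hpre fun w => s(succPerm e' x, w) ∈ U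
      have h7 := hD _ hokx
      have h8 := hD _ hoky
      omega
    obtain ⟨w, hw, hw'⟩ := exists_mem_notMem_of_card_lt_card (h2.trans_lt h1)
    simp only [mem_union, mem_filter, mem_univ, true_and, not_or, not_not] at hw hw'
    refine ⟨w, ?_, ?_, ?_⟩
    · rintro rfl; exact hR _ hw.1
    · refine mem_filter.2 ⟨hw.1, hw'.1.1, fun v hv => ?_⟩
      rcases Sym2.mem_iff.1 hv with rfl | rfl
      exacts [hokx, hw'.2.1]
    · refine mem_filter.2 ⟨hw.2, hw'.1.2, fun v hv => ?_⟩
      rcases Sym2.mem_iff.1 hv with rfl | rfl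
      exacts [hoky, hw'.2.2]
  obtain ⟨e', h1, h2⟩ := exists_completion hn e A _ k hk hN
  refine ⟨e', fun z hz => ?_, h2⟩
  have := h1 hz
  rwa [mem_union, mem_filter] at this

end Degrees

/-- Linear forests covering most of cyclic orders are completed to pairwise edge-disjoint cyclic
orders, using additional edges from a robust reservoir. -/
lemma exists_disjoint_completions {ι V : Type*} [Fintype V] [DecidableEq V] [DecidableEq ι]
    {n : ℕ} [NeZero n] (hn : 3 ≤ n) (F : ι → Finset (Sym2 V)) (e : ι → Fin n ≃ V)
    (hFe : ∀ i, F i ⊆ cycEdges (e i)) (hF : ∀ i j, i ≠ j → Disjoint (F i) (F j))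
    (J I : Finset ι) (hIJ : Disjoint I J) (k B h H : ℕ)
    (hk : ∀ i ∈ I, (cycEdges (e i) \ F i).card ≤ k)
    (hB : ∀ v, (I.filter fun i => ∃ z ∈ cycEdges (e i) \ F i, v ∈ z).card ≤ B)
    (hH : 6 * k * I.card < h * (H + 1))
    (hΘ : ∀ i ∈ I, ∀ e' : Fin n ≃ V, (cycEdges e' \ cycEdges (e i)).card ≤ 2 * k → ∀ x y,
      2 * (h + 1 + 2 * B) + 2 * H <
        (univ.filter fun w => Rel F J x w ∧ Rel F J y (succPerm e' w)).card) :
    ∃ e' : ι → Fin n ≃ V, (∀ i ∈ I, ∀ z ∈ cycEdges (e' i), ∃ j, z ∈ F j) ∧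
      ∀ i ∈ I, ∀ j ∈ I, i ≠ j → Disjoint (cycEdges (e' i)) (cycEdges (e' j)) := by
  classical
  let R := J.biUnion F
  have hRel : ∀ x w, Rel F J x w ↔ s(x, w) ∈ R := fun x w => by simp [R, Rel]
  have hRF : ∀ i ∈ I, ∀ z, z ∈ F i → z ∉ R := by
    intro i hi z hz hzR
    obtain ⟨j, hj, hzj⟩ := mem_biUnion.1 hzR
    have hij : i ≠ j := fun h => disjoint_left.1 hIJ hi (h ▸ hj)
    exact disjoint_left.1 (hF _ _ hij) hz hzj
  have hRloop : ∀ x, s(x, x) ∉ R := by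
    intro x hx
    obtain ⟨j, hj, hzj⟩ := mem_biUnion.1 hx
    have := (mem_cycEdges_iff_or _).1 (hFe _ hzj)
    rw [or_self] at this
    exact succPerm_ne _ (by omega) _ this
  let E : ι → V → Prop := fun i v => ∃ z ∈ cycEdges (e i) \ F i, v ∈ z
  suffices hind : ∀ I' ⊆ I, ∃ e' : ι → Fin n ≃ V,
      (∀ i ∈ I', ∀ z ∈ cycEdges (e' i), z ∈ F i ∨ z ∈ R) ∧
      (∀ i ∈ I', ∀ j ∈ I', i ≠ j → Disjoint (cycEdges (e' i)) (cycEdges (e' j))) ∧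
      ((I'.biUnion fun i => cycEdges (e' i)) ∩ R).card ≤ 3 * k * I'.card ∧
      ∀ v, (univ.filter fun w => s(v, w) ∈ (I'.biUnion fun i => cycEdges (e' i)) ∩ R).card ≤
        h + 1 + 2 * (I'.filter fun i => E i v).card by
    obtain ⟨e', h1, h2, -, -⟩ := hind I subset_rfl
    refine ⟨e', fun i hi z hz => ?_, h2⟩
    rcases h1 i hi z hz with h | h
    · exact ⟨i, h⟩
    · obtain ⟨j, -, hj⟩ := mem_biUnion.1 h
      exact ⟨j, hj⟩
  intro I'
  induction I' using Finset.induction_on with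
  | empty => intro _; exact ⟨e, by simp⟩
  | insert i I' hi ih =>
    intro hI
    obtain ⟨e', h1, h2, h3, h4⟩ := ih ((subset_insert _ _).trans hI)
    have hiI : i ∈ I := hI (mem_insert_self _ _)
    have hI' : I' ⊆ I := (subset_insert _ _).trans hI
    set U := (I'.biUnion fun i => cycEdges (e' i)) ∩ R with hU
    let ok : V → Prop := fun v => (univ.filter fun w => s(v, w) ∈ U).card < h ∨ E i v
    have hD : ∀ v, (univ.filter fun w => s(v, w) ∈ U).card ≤ h + 1 + 2 * B := by
      intro v
      have h5 : (I'.filter fun i => E i v).card ≤ B :=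
        (card_le_card (filter_subset_filter _ hI')).trans (hB v)
      have := h4 v
      omega
    have hheavy : (univ.filter fun v => ¬ ok v).card ≤ H := by
      have h5 : (univ.filter fun v => ¬ ok v).card * h ≤
          ∑ v, (univ.filter fun w => s(v, w) ∈ U).card := by
        rw [← smul_eq_mul]
        refine (card_nsmul_le_sum _ (fun v => (univ.filter fun w => s(v, w) ∈ U).card) _ ?_).trans
          (sum_le_sum_of_subset (subset_univ _))
        intro v hv
        simp only [ok, mem_filter, mem_univ, true_and, not_or, not_lt] at hv
        exact hv.1
      have h6 := sum_card_filter_mk_mem_le U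
      have h7 : k * I'.card ≤ k * I.card := Nat.mul_le_mul_left _ (card_le_card hI')
      have h8 : (univ.filter fun v => ¬ ok v).card * h < (H + 1) * h := by
        rw [mul_comm (H + 1)]; linarith
      exact Nat.lt_succ_iff.1 (lt_of_mul_lt_mul_right h8 (Nat.zero_le _))
    obtain ⟨f, hf1, hf2⟩ := exists_completion_avoiding hn (e i) (F i) R U ok k (h + 1 + 2 * B) H
      (hk i hiI) (fun z hz v hv => Or.inr ⟨z, hz, hv⟩) (fun v _ => hD v) hheavy hRloop
      (fun e' he' x y => by simpa only [hRel] using hΘ i hiI e' he' x y)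
    have hne : ∀ j ∈ I', j ≠ i := fun j hj hji => hi (hji ▸ hj)
    have hupd : ∀ j ∈ I', Function.update e' i f j = e' j := fun j hj =>
      Function.update_of_ne (hne j hj) _ _
    have hnew : (((insert i I').biUnion fun j => cycEdges (Function.update e' i f j)) ∩ R) =
        U ∪ (cycEdges f ∩ R) := by
      rw [biUnion_insert, Function.update_self, union_inter_distrib_right, union_comm, hU]
      congr 2
      exact biUnion_congr rfl fun j hj => by rw [hupd j hj]
    have hdisj : ∀ j ∈ I', Disjoint (cycEdges f) (cycEdges (e' j)) := by
      intro j hj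
      rw [disjoint_left]
      intro z hz hzj
      rcases hf1 z hz with hzi | ⟨hzR, hzU, -⟩
      · rcases h1 j hj z hzj with h | h
        · exact disjoint_left.1 (hF _ _ (hne j hj)) h hzi
        · exact hRF i hiI z hzi h
      · exact hzU (mem_inter.2 ⟨mem_biUnion.2 ⟨j, hj, hzj⟩, hzR⟩)
    refine ⟨Function.update e' i f, ?_, ?_, ?_, ?_⟩
    · intro j hj
      rcases mem_insert.1 hj with rfl | hj
      · rw [Function.update_self]
        exact fun z hz => (hf1 z hz).imp_right And.left
      · rw [hupd j hj]; exact h1 j hj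
    · intro a ha b hb hab
      rcases mem_insert.1 ha with h5 | h5 <;> rcases mem_insert.1 hb with h6 | h6
      · exact absurd (h5.trans h6.symm) hab
      · rw [h5, Function.update_self, hupd b h6]; exact hdisj b h6
      · rw [h6, Function.update_self, hupd a h5]; exact (hdisj a h5).symm
      · rw [hupd a h5, hupd b h6]; exact h2 a h5 b h6 hab
    · rw [hnew, card_insert_of_notMem hi]
      have h5 : cycEdges f ∩ R ⊆ (cycEdges f \ cycEdges (e i)) ∪ (cycEdges (e i) \ F i) := by
        intro z hz
        obtain ⟨hzf, hzR⟩ := mem_inter.1 hz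
        rw [mem_union, Finset.mem_sdiff, Finset.mem_sdiff]
        by_cases h6 : z ∈ cycEdges (e i)
        · exact Or.inr ⟨h6, fun h7 => hRF i hiI z h7 hzR⟩
        · exact Or.inl ⟨hzf, h6⟩
      have h6 := (card_le_card h5).trans (card_union_le _ _)
      have h7 := card_union_le U (cycEdges f ∩ R)
      have h8 := hk i hiI
      have h9 : 3 * k * (I'.card + 1) = 3 * k * I'.card + 3 * k := by ring
      omega
    · intro v
      rw [hnew]
      have h5 : (univ.filter fun w => s(v, w) ∈ U ∪ (cycEdges f ∩ R)) ⊆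
          (univ.filter fun w => s(v, w) ∈ U) ∪ univ.filter fun w => s(v, w) ∈ cycEdges f ∩ R := by
        intro w hw
        simpa only [mem_filter, mem_univ, true_and, mem_union] using hw
      have h6 := (card_le_card h5).trans (card_union_le _ _)
      have h7 : (univ.filter fun w => s(v, w) ∈ cycEdges f ∩ R).card ≤ 2 :=
        (card_le_card (fun w hw => by
          simp only [mem_filter, mem_univ, true_and, mem_inter] at hw ⊢
          exact hw.1)).trans (card_filter_mk_mem_cycEdges_le f v)
      have h8 := h4 v
      have h9 : ¬ ok v → (univ.filter fun w => s(v, w) ∈ cycEdges f ∩ R).card = 0 := by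
        intro hv
        rw [card_eq_zero, filter_eq_empty_iff]
        intro w _ hw
        obtain ⟨hw1, hw2⟩ := mem_inter.1 hw
        rcases hf1 _ hw1 with h10 | ⟨-, -, h10⟩
        · exact hRF i hiI _ h10 hw2
        · exact hv (h10 v (Sym2.mem_mk_left _ _))
      rw [filter_insert]
      by_cases hE : E i v
      · rw [if_pos hE, card_insert_of_notMem (fun h => hi (mem_filter.1 h).1)]
        omega
      · rw [if_neg hE]
        by_cases hv : (univ.filter fun w => s(v, w) ∈ U).card < h
        · omega
        · have := h9 (not_or.2 ⟨hv, hE⟩)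
          omega

lemma card_missing_edges_le {V : Type*} [Fintype V] [DecidableEq V] {n : ℕ} [NeZero n]
    (e : Fin n ≃ V) (A : Finset (Sym2 V)) :
    (cycEdges e \ A).card ≤ (univ.filter fun v => ¬ (s(v, succPerm e v) ∈ A ∧
      s((succPerm e).symm v, v) ∈ A)).card := by
  refine le_trans (card_le_card ?_) (card_image_le (f := fun v => s(v, succPerm e v)))
  intro z hz
  obtain ⟨h1, h2⟩ := Finset.mem_sdiff.1 hz
  obtain ⟨v, rfl⟩ := (mem_cycEdges e).1 h1
  exact mem_image_of_mem _ (mem_filter.2 ⟨mem_univ _, fun h => h2 h.1⟩)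

/-- If every vertex is an inner vertex of all but `c` of the linear forests `A i`, then few of the
linear forests miss many edges. -/
lemma card_many_missing_mul_le {ι V : Type*} [Fintype ι] [Fintype V] [DecidableEq V] {n : ℕ}
    [NeZero n] (e : ι → Fin n ≃ V) (A : ι → Finset (Sym2 V)) (k : ℕ) {c : ℝ}
    (hc : ∀ v, ((univ.filter fun i => ¬ (s(v, succPerm (e i) v) ∈ A i ∧
      s((succPerm (e i)).symm v, v) ∈ A i)).card : ℝ) ≤ c) :
    ((univ.filter fun i => k < (cycEdges (e i) \ A i).card).card : ℝ) * (k + 1) ≤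
      Fintype.card V * c := by
  have h1 : (univ.filter fun i => k < (cycEdges (e i) \ A i).card).card * (k + 1) ≤
      ∑ i, (cycEdges (e i) \ A i).card := by
    rw [← smul_eq_mul]
    refine (card_nsmul_le_sum _ (fun i => (cycEdges (e i) \ A i).card) _ ?_).trans
      (sum_le_sum_of_subset (subset_univ _))
    intro i hi
    exact (mem_filter.1 hi).2
  have h2 : ∑ i, (univ.filter fun v => ¬ (s(v, succPerm (e i) v) ∈ A i ∧
      s((succPerm (e i)).symm v, v) ∈ A i)).card = ∑ v, (univ.filter fun i =>
      ¬ (s(v, succPerm (e i) v) ∈ A i ∧ s((succPerm (e i)).symm v, v) ∈ A i)).card := by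
    simp only [card_filter]
    exact sum_comm
  have h3 := h1.trans ((sum_le_sum fun i _ => card_missing_edges_le (e i) (A i)).trans h2.le)
  calc _ ≤ ((∑ v, (univ.filter fun i => ¬ (s(v, succPerm (e i) v) ∈ A i ∧
        s((succPerm (e i)).symm v, v) ∈ A i)).card : ℕ) : ℝ) := by exact_mod_cast h3
    _ ≤ ∑ v : V, c := by rw [Nat.cast_sum]; exact sum_le_sum fun v _ => hc v
    _ = _ := by simp

set_option maxHeartbeats 1000000 in
/-- A dense regular graph contains many pairwise edge-disjoint spanning cyclic orders. -/
lemma exists_disjoint_orders {η : ℝ} (hη : 0 < η) (hη1 : η ≤ 1) :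
    ∃ n₀ : ℕ, ∀ (V : Type) [Fintype V] [DecidableEq V] (n : ℕ) [NeZero n] (G : SimpleGraph V)
      [DecidableRel G.Adj] (d : ℕ), Fintype.card V = n → n₀ ≤ n → G.IsRegularOfDegree d →
      (1 / 2 + η) * (n : ℝ) ≤ d → 3 ≤ n ∧
      ∃ (ι : Type) (I : Finset ι) (e : ι → Fin n ≃ V), ((d : ℝ) - η * n) / 2 ≤ I.card ∧
        (∀ i ∈ I, ∀ z ∈ cycEdges (e i), z ∈ G.edgeSet) ∧
        ∀ i ∈ I, ∀ j ∈ I, i ≠ j → Disjoint (cycEdges (e i)) (cycEdges (e j)) := by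
  obtain ⟨q, hq⟩ : ∃ q, q = ⌈8 / η⌉₊ := ⟨_, rfl⟩
  have hqη : 8 / η ≤ q := hq ▸ Nat.le_ceil _
  have hq0 : 0 < (q : ℝ) := lt_of_lt_of_le (by positivity) hqη
  have : NeZero q := ⟨by rintro rfl; simp at hq0⟩
  have hq1 : (1 : ℝ) ≤ q := by exact_mod_cast Nat.pos_of_ne_zero (NeZero.ne q)
  obtain ⟨μ, n₁, hμ, hres⟩ := exists_reservoir hη hη1 q
  obtain ⟨θ, hθ⟩ : ∃ θ : ℝ, θ = 1 / (64 * (q : ℝ) ^ 2) * η := ⟨_, rfl⟩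
  have hθ0 : 0 < θ := by rw [hθ]; positivity
  have hθ1 : θ ≤ 1 := by
    have : 1 / (64 * (q : ℝ) ^ 2) ≤ 1 := by
      rw [div_le_one (by positivity)]
      have : (1 : ℝ) ≤ q ^ 2 := one_le_pow₀ hq1
      linarith
    rw [hθ]; exact mul_le_one₀ this hη.le hη1
  obtain ⟨s, hs⟩ : ∃ s : ℝ, s = min (θ ^ 2 / 1000) (min (μ / 4) (η / 16)) := ⟨_, rfl⟩
  have hs0 : 0 < s := by rw [hs]; positivity
  have hsθ : s ≤ θ ^ 2 / 1000 := hs ▸ min_le_left _ _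
  have hsμ : s ≤ μ / 4 := hs ▸ (min_le_right _ _).trans (min_le_left _ _)
  have hsη : s ≤ η / 16 := hs ▸ (min_le_right _ _).trans (min_le_right _ _)
  have hss : s ^ 2 ≤ s := by rw [sq]; exact mul_le_of_le_one_left hs0.le (by linarith)
  obtain ⟨n₂, hforest⟩ := exists_linearForests (ε := s ^ 2) (by positivity) (by linarith)
  refine ⟨max 3 (max n₁ (max n₂ ⌈8 / θ⌉₊)), fun V _ _ n _ G _ d hn hn₀ hG hd => ?_⟩
  simp only [max_le_iff] at hn₀
  obtain ⟨hn3, hn1, hn2, hnθ⟩ := hn₀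
  refine ⟨hn3, ?_⟩
  replace hnθ : 8 ≤ n * θ := (div_le_iff₀ hθ0).1 (Nat.ceil_le.1 hnθ)
  have hnpos : (0 : ℝ) < n := by exact_mod_cast (show 0 < n by omega)
  have hηn : 0 ≤ η * n := by positivity
  obtain ⟨h, D, F, e, hFe, hFG, hF, hmiss, hlo, hup⟩ := hforest V n G d hn hn2 hG (by linarith)
  have hιcard : (Fintype.card (Fin h × Fin D) : ℝ) = h * D := by simp
  have hdn : (d : ℝ) ≤ n := by
    have v : V := (Fintype.card_pos_iff.1 (by omega)).some
    have := G.degree_lt_card_verts v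
    rw [hG.degree_eq, hn] at this
    exact_mod_cast this.le
  have hssn : s ^ 2 * n ≤ s * n := by gcongr
  have hsn0 : 0 < s * n := by positivity
  have hsnη : s * n ≤ η / 16 * n := by gcongr
  have hηn1 : η * n ≤ n := mul_le_of_le_one_left hnpos.le hη1
  have hιn : (Fintype.card (Fin h × Fin D) : ℝ) ≤ n := by
    rw [hιcard]; linarith
  obtain ⟨J, hJq, hJ⟩ := hres V (Fin h × Fin D) n F e hn1 (by exact_mod_cast hιn)
    (fun i x => (card_le_card (fun w hw => by
      simp only [mem_filter, mem_univ, true_and] at hw ⊢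
      exact hFe i hw)).trans (card_filter_mk_mem_cycEdges_le (e i) x))
  obtain ⟨k, hk⟩ : ∃ k, k = ⌊s * n⌋₊ := ⟨_, rfl⟩
  have hk1 : (k : ℝ) ≤ s * n := hk ▸ Nat.floor_le hsn0.le
  have hk2 : s * n < k + 1 := hk ▸ Nat.lt_floor_add_one _
  obtain ⟨X, hX⟩ : ∃ X : Finset (Fin h × Fin D),
    X = univ.filter fun i => k < (cycEdges (e i) \ F i).card := ⟨_, rfl⟩
  have hXcard : (X.card : ℝ) ≤ s * n := by
    have h1 := card_many_missing_mul_le e F k hmiss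
    rw [hn, ← hX] at h1
    have h2 : (X.card : ℝ) * (s * n) ≤ X.card * (k + 1) := by gcongr
    have h3 : (X.card : ℝ) * (s * n) ≤ s * n * (s * n) := by linarith
    exact le_of_mul_le_mul_right h3 hsn0
  obtain ⟨I, hI⟩ : ∃ I, I = univ \ (J ∪ X) := ⟨_, rfl⟩
  have hIJ : Disjoint I J := by
    rw [hI]
    exact disjoint_of_subset_right subset_union_left sdiff_disjoint
  have hIX : ∀ i ∈ I, (cycEdges (e i) \ F i).card ≤ k := by
    intro i hi
    rw [hI, Finset.mem_sdiff, mem_union, not_or] at hi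
    have := hi.2.2
    rw [hX, mem_filter] at this
    simpa using this
  have hJcard : (J.card : ℝ) ≤ η / 8 * n := by
    have h1 : (J.card : ℝ) * q ≤ n := le_trans (by exact_mod_cast hJq) hιn
    rw [div_le_iff₀ hη] at hqη
    have h2 : (J.card : ℝ) * 8 ≤ J.card * (q * η) := by gcongr
    have h3 : (J.card : ℝ) * q * η ≤ n * η := by gcongr
    linarith
  have hIcard : ((d : ℝ) - η * n) / 2 ≤ I.card := by
    have h1 : Fintype.card (Fin h × Fin D) ≤ I.card + (J.card + X.card) := by
      have h2 := card_sdiff_add_card_eq_card (subset_univ (J ∪ X))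
      rw [← hI, card_univ] at h2
      have := card_union_le J X
      omega
    have h2 : (Fintype.card (Fin h × Fin D) : ℝ) ≤ I.card + (J.card + X.card) := by
      exact_mod_cast h1
    rw [hιcard] at h2
    linarith
  have hIn : (I.card : ℝ) ≤ n := le_trans (by exact_mod_cast card_le_univ I) hιn
  obtain ⟨B, hB⟩ : ∃ B, B = ⌊s ^ 2 * n⌋₊ := ⟨_, rfl⟩
  have hB1 : (B : ℝ) ≤ s ^ 2 * n := hB ▸ Nat.floor_le (by positivity)
  obtain ⟨b, hb⟩ : ∃ b, b = ⌈θ * n / 16⌉₊ := ⟨_, rfl⟩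
  have hb1 : θ * n / 16 ≤ b := hb ▸ Nat.le_ceil _
  have hb2 : (b : ℝ) < θ * n / 16 + 1 := hb ▸ Nat.ceil_lt_add_one (by positivity)
  obtain ⟨H, hH⟩ : ∃ H, H = ⌊96 * s * n / θ⌋₊ := ⟨_, rfl⟩
  have hH1 : (H : ℝ) ≤ 96 * s * n / θ := hH ▸ Nat.floor_le (by positivity)
  have hH2 : 96 * s * n / θ < H + 1 := hH ▸ Nat.lt_floor_add_one _
  have hBI : ∀ v, (I.filter fun i => ∃ z ∈ cycEdges (e i) \ F i, v ∈ z).card ≤ B := by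
    intro v
    rw [hB]
    apply Nat.le_floor
    refine le_trans (Nat.cast_le.2 (card_le_card ?_)) (hmiss v)
    intro i hi
    obtain ⟨-, z, hz, hvz⟩ := mem_filter.1 hi
    obtain ⟨hz1, hz2⟩ := Finset.mem_sdiff.1 hz
    refine mem_filter.2 ⟨mem_univ _, fun h => ?_⟩
    obtain ⟨w, rfl⟩ := (mem_cycEdges _).1 hz1
    rcases Sym2.mem_iff.1 hvz with rfl | rfl
    · exact hz2 h.1
    · apply hz2
      have := h.2
      rwa [Equiv.symm_apply_apply] at this
  have hkH : 6 * k * I.card < b * (H + 1) := by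
    have h1 : (6 * k * I.card : ℝ) ≤ 6 * (s * n) * n := by gcongr
    have h2 : 6 * (s * n) * n < b * (H + 1) := by
      calc 6 * (s * n) * n = θ * n / 16 * (96 * s * n / θ) := by field_simp; norm_num
        _ < θ * n / 16 * (H + 1) := by gcongr
        _ ≤ _ := by gcongr
    exact_mod_cast h1.trans_lt h2
  have hΘ : ∀ i ∈ I, ∀ f : Fin n ≃ V, (cycEdges f \ cycEdges (e i)).card ≤ 2 * k → ∀ x y,
      2 * (b + 1 + 2 * B) + 2 * H <
        (univ.filter fun w => Rel F J x w ∧ Rel F J y (succPerm f w)).card := by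
    intro i hi f hf x y
    have hdeg : ∀ x, (d : ℝ) - 4 * (s ^ 2 * n) ≤ (univ.filter fun w => Rel F univ x w).card := by
      intro x
      have h1 := le_card_rel_univ hn3 F e hF x
      have h2 : 2 * (Fintype.card (Fin h × Fin D) : ℝ) ≤ (univ.filter fun w => Rel F univ x w).card +
          2 * (univ.filter fun i => ¬ (s(x, succPerm (e i) x) ∈ F i ∧
          s((succPerm (e i)).symm x, x) ∈ F i)).card := by exact_mod_cast h1
      have h3 := hmiss x
      rw [hιcard] at h2
      linarith
    have hcommon : (2 * d : ℝ) - 8 * (s ^ 2 * n) - n ≤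
        (univ.filter fun w => Rel F univ x w ∧ Rel F univ y (succPerm f w)).card := by
      have h1 := card_rel_succ_ge (Rel F univ) (succPerm f) x y
      have h2 : ((univ.filter fun w => Rel F univ x w).card : ℝ) +
          (univ.filter fun w => Rel F univ y w).card ≤
          (univ.filter fun w => Rel F univ x w ∧ Rel F univ y (succPerm f w)).card + n := by
        rw [hn] at h1; exact_mod_cast h1
      have h3 := hdeg x
      have h4 := hdeg y
      linarith
    have hsμn : s * n ≤ μ / 4 * n := by gcongr
    have h1 := card_common_of_close hn3 (e i) f (Rel F univ) (Rel F J) x y (2 * k) hf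
      (M := μ * n) (B := η * n) (θ := θ * n)
      (fun τ hτ hB => by
        have := hJ i x y τ hτ hB
        rwa [← mul_assoc, ← hθ] at this)
      (by push_cast; linarith) (by push_cast; linarith)
    push_cast at h1
    have h2 : 96 * s * n / θ ≤ θ * n / 10 := by
      rw [div_le_iff₀ hθ0]
      have : s * n ≤ θ ^ 2 / 1000 * n := by gcongr
      nlinarith
    have h3 : s * n ≤ θ * n / 1000 := by
      have h4 : θ ^ 2 ≤ θ := by rw [sq]; exact mul_le_of_le_one_left hθ0.le hθ1
      have : s * n ≤ θ / 1000 * n := by gcongr; linarith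
      linarith
    have h5 : (2 * (b + 1 + 2 * B) + 2 * H : ℝ) <
        (univ.filter fun w => Rel F J x w ∧ Rel F J y (succPerm f w)).card := by
      linarith
    exact_mod_cast h5
  obtain ⟨e', he'1, he'2⟩ :=
    exists_disjoint_completions hn3 F e hFe hF J I hIJ k B b H hIX hBI hkH hΘ
  exact ⟨_, I, e', hIcard, fun i hi z hz => by
    obtain ⟨j, hj⟩ := he'1 i hi z hz
    exact hFG j z hj, he'2⟩

end HamiltonPacking

/-- For every η > 0 there exists n₀ such that every d-regular graph on n ≥ n₀ vertices with
d ≥ (1/2 + η)n contains at least (d − ηn)/2 pairwise edge-disjoint Hamilton cycles. -/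
theorem regular_graph_edge_disjoint_hamilton (η : ℝ) (hη : 0 < η) :
    ∃ n₀ : ℕ, ∀ (V : Type) [Fintype V] [DecidableEq V] (G : SimpleGraph V)
      [DecidableRel G.Adj] (d : ℕ),
      n₀ ≤ Fintype.card V →
      G.IsRegularOfDegree d →
      ((1 / 2 + η) * (Fintype.card V : ℝ) ≤ (d : ℝ)) →
      ∃ (m : ℕ) (x : Fin m → V) (c : ∀ j : Fin m, G.Walk (x j) (x j)),
        ((d : ℝ) - η * (Fintype.card V : ℝ)) / 2 ≤ (m : ℝ) ∧
        (∀ j, (c j).IsHamiltonianCycle) ∧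
        ∀ j k : Fin m, j ≠ k → ∀ e : Sym2 V, e ∈ (c j).edges → e ∉ (c k).edges := by
  rcases le_or_gt η 1 with hη1 | hη1
  · obtain ⟨n₀, hn₀⟩ := HamiltonPacking.exists_disjoint_orders hη hη1
    refine ⟨max n₀ 1, fun V _ _ G _ d hn hG hd => ?_⟩
    have : NeZero (Fintype.card V) := ⟨by have := le_of_max_le_right hn; omega⟩
    obtain ⟨hn3, ι, I, e, hI, hG, hdisj⟩ :=
      hn₀ V (Fintype.card V) G d rfl (le_of_max_le_left hn) hG hd
    have key : ∀ j : Fin I.card, ∃ (x : V) (c : G.Walk x x), c.IsHamiltonianCycle ∧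
        ∀ z ∈ c.edges, z ∈ HamiltonPacking.cycEdges (e (I.equivFin.symm j)) := fun j =>
      HamiltonPacking.exists_isHamiltonianCycle G hn3 _ fun v =>
        hG _ (I.equivFin.symm j).2 _ (HamiltonPacking.mk_succPerm_mem _ v)
    choose x c hc hce using key
    refine ⟨I.card, x, c, hI, hc, fun j k hjk z hzj hzk => ?_⟩
    refine Finset.disjoint_left.1 (hdisj _ (I.equivFin.symm j).2 _ (I.equivFin.symm k).2 ?_)
      (hce j z hzj) (hce k z hzk)
    intro h
    exact hjk (I.equivFin.symm.injective (Subtype.ext h))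
  · refine ⟨1, fun V _ _ G _ d hn hG hd => ?_⟩
    have v : V := (Fintype.card_pos_iff.1 hn).some
    have h1 := G.degree_lt_card_verts v
    rw [hG.degree_eq] at h1
    have h2 : (d : ℝ) < Fintype.card V := by exact_mod_cast h1
    nlinarith
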